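/- arXiv:2212.14792 — 4 statements merged into one kernel-verified Lean document; each statement's English description precedes it below -/
import Mathlib

section
/- Let Γ be a connected non-bipartite graph such that the vertex set of every odd cycle of Γ is a dominating set. Then for every t ≥ 1 the module I^{(t)}/I^t has finite length and H^1_m(R/I^t) ≅ H^1_m(R/I^{(t)}). -/
open MvPolynomial

noncomputable section

/-- The edge ideal of a graph `Γ` on vertex set `σ`, in `k[x_i : i ∈ σ]`. -/
def edgeIdeal (k : Type) [Field k] {σ : Type} (Γ : SimpleGraph σ) :
    Ideal (MvPolynomial σ k) :=
  Ideal.span { m | ∃ i j : σ, Γ.Adj i j ∧ m = X i * X j }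

/-- The maximal graded ideal `(x_i : i ∈ σ)` of `k[x_i : i ∈ σ]`. -/
def maxIdeal (k : Type) [Field k] (σ : Type) : Ideal (MvPolynomial σ k) :=
  Ideal.span (Set.range (X : σ → MvPolynomial σ k))

/-- `depth R/J = 0`, i.e. the maximal graded ideal is an associated prime of `R/J`. -/
def DepthZero (k : Type) [Field k] {σ : Type} (J : Ideal (MvPolynomial σ k)) : Prop :=
  maxIdeal k σ ∈ associatedPrimes (MvPolynomial σ k) (MvPolynomial σ k ⧸ J)

/-- The `i`-th local cohomology of `R/J` with support in the maximal graded ideal. -/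
def locCoh (k : Type) [Field k] {σ : Type} (J : Ideal (MvPolynomial σ k)) (i : ℕ) :=
  (localCohomology (maxIdeal k σ) i).obj (ModuleCat.of _ (MvPolynomial σ k ⧸ J))

/-- `depth R/J`, defined as the least `i` with `H^i_m(R/J) ≠ 0`. -/
def rDepth (k : Type) [Field k] {σ : Type} (J : Ideal (MvPolynomial σ k)) : ℕ :=
  sInf { i | Nontrivial (locCoh k J i) }

/-- A set `U` of vertices is dominating: every vertex outside `U` is adjacent to a
vertex of `U`. -/
def Dominating {σ : Type} (Γ : SimpleGraph σ) (U : Set σ) : Prop :=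
  ∀ v ∉ U, ∃ u ∈ U, Γ.Adj u v

/-- The closed neighborhood `N[v]` of a vertex. -/
def closedNbhd {σ : Type} (Γ : SimpleGraph σ) (v : σ) : Set σ :=
  insert v { u | Γ.Adj v u }

/-- The closed neighborhood `N[C]` of a set of vertices. -/
def closedNbhdSet {σ : Type} (Γ : SimpleGraph σ) (C : Set σ) : Set σ :=
  ⋃ v ∈ C, closedNbhd Γ v

/-- An odd cycle of length `m` (given as an injective map `ZMod m → σ` with consecutive
vertices adjacent) in `Γ`. -/
def IsOddCycle {σ : Type} (Γ : SimpleGraph σ) (m : ℕ) (c : ZMod m → σ) : Prop :=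
  Odd m ∧ 3 ≤ m ∧ Function.Injective c ∧ ∀ i, Γ.Adj (c i) (c (i + 1))

/-- `F` is an independent set of `Γ`. -/
def IsIndep {σ : Type} [Fintype σ] [DecidableEq σ] (Γ : SimpleGraph σ) (F : Finset σ) : Prop :=
  ∀ i ∈ F, ∀ j ∈ F, ¬ Γ.Adj i j

/-- `F` is a maximal independent set of `Γ`. -/
def IsMaxIndep {σ : Type} [Fintype σ] [DecidableEq σ] (Γ : SimpleGraph σ) (F : Finset σ) : Prop :=
  IsIndep Γ F ∧ ∀ G : Finset σ, IsIndep Γ G → F ⊆ G → G = F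

/-- The prime ideal `P_F = (x_i : i ∉ F)`. -/
def PF (k : Type) [Field k] {σ : Type} [Fintype σ] [DecidableEq σ] (F : Finset σ) :
    Ideal (MvPolynomial σ k) :=
  Ideal.span { m | ∃ i ∉ F, m = X i }

/-- The `t`-th symbolic power `I^{(t)} = ⋂_{F maximal independent} P_F^t` of the edge ideal. -/
def symbPow (k : Type) [Field k] {σ : Type} [Fintype σ] [DecidableEq σ]
    (Γ : SimpleGraph σ) (t : ℕ) : Ideal (MvPolynomial σ k) :=
  ⨅ F ∈ { F : Finset σ | IsMaxIndep Γ F }, PF k F ^ t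

/-- The monomial `x^a`. -/
def xPow (k : Type) [Field k] {σ : Type} [Fintype σ] (a : σ → ℕ) : MvPolynomial σ k :=
  ∏ i, X i ^ a i

/-- The localization `R[x_i^{-1} : i ∈ F]`. -/
abbrev locAt (k : Type) [Field k] {σ : Type} (F : Finset σ) :=
  Localization (Submonoid.closure ((fun i => (X i : MvPolynomial σ k)) '' (F : Set σ)))

/-- The degree complex `Δ_a(J) = {F : x^a ∉ J·R[x_i^{-1} : i ∈ F]}` of a monomial ideal `J`. -/
def degComplex (k : Type) [Field k] {σ : Type} [Fintype σ] (J : Ideal (MvPolynomial σ k))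
    (a : σ → ℕ) : Set (Finset σ) :=
  { F | algebraMap (MvPolynomial σ k) (locAt k F) (xPow k a) ∉
      J.map (algebraMap (MvPolynomial σ k) (locAt k F)) }

/-- `F` is a facet (maximal face) of the complex `Δ`. -/
def IsFacet {σ : Type} (Δ : Set (Finset σ)) (F : Finset σ) : Prop :=
  F ∈ Δ ∧ ∀ G ∈ Δ, F ⊆ G → G = F

/-- The complex `Δ` is disconnected: its vertex set splits into two nonempty parts such that
no face meets both. -/
def ComplexDisconnected {σ : Type} (Δ : Set (Finset σ)) : Prop :=
  ∃ A B : Set σ, A.Nonempty ∧ B.Nonempty ∧ Disjoint A B ∧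
    (∀ i, {i} ∈ Δ ↔ i ∈ A ∪ B) ∧
    ∀ F ∈ Δ, ¬ ((∃ i ∈ F, i ∈ A) ∧ (∃ j ∈ F, j ∈ B))

/-- The polynomial ring `R_v = k[x_i : i ≠ v]`. -/
abbrev Rv (k : Type) [Field k] {σ : Type} (v : σ) := MvPolynomial { i : σ // i ≠ v } k

/-- The localization `R[x_v^{-1}]`. -/
abbrev LocAway (k : Type) [Field k] {σ : Type} (v : σ) :=
  Localization.Away (X v : MvPolynomial σ k)

/-- For an ideal `I` of `R`, the ideal `I_v = I·R[x_v^{-1}] ∩ R_v` of `R_v`. -/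
def idealV (k : Type) [Field k] {σ : Type} (I : Ideal (MvPolynomial σ k)) (v : σ) :
    Ideal (Rv k v) :=
  Ideal.comap ((algebraMap (MvPolynomial σ k) (LocAway k v)).comp
      (MvPolynomial.rename (Subtype.val : { i : σ // i ≠ v } → σ)).toRingHom)
    (I.map (algebraMap (MvPolynomial σ k) (LocAway k v)))

/-- The edge ideal of the induced subgraph `Γ_U` in `k[x_i : i ∈ U]`. -/
def edgeIdealOn (k : Type) [Field k] {σ : Type} (Γ : SimpleGraph σ) (U : Set σ) :
    Ideal (MvPolynomial U k) :=
  Ideal.span { m | ∃ i j : U, Γ.Adj (i : σ) (j : σ) ∧ m = X i * X j }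

/-- `Γ` has no isolated vertices. -/
def NoIsolated {σ : Type} (Γ : SimpleGraph σ) : Prop :=
  ∀ v : σ, ∃ u : σ, Γ.Adj v u

section ExtPart
open CategoryTheory Limits Opposite
variable {R : Type} [CommRing R]

abbrev HY (Y : ModuleCat.{0} R) : ModuleCat.{0} R ⥤ (ModuleCat.{0} R)ᵒᵖ :=
  ((linearYoneda R (ModuleCat.{0} R)).obj Y).rightOp

abbrev KC {X : ModuleCat.{0} R} (P : ProjectiveResolution X) (Y : ModuleCat.{0} R) :
    ChainComplex (ModuleCat.{0} R)ᵒᵖ ℕ :=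
  ((HY Y).mapHomologicalComplex (ComplexShape.down ℕ)).obj P.complex

def eExt {X : ModuleCat.{0} R} (P : ProjectiveResolution X) (Y : ModuleCat.{0} R) :
    ((HY Y).leftDerived 1).obj X ≅ (KC P Y).homology 1 :=
  P.isoLeftDerivedObj (HY Y) 1

def iotaExt {X : ModuleCat.{0} R} (P : ProjectiveResolution X) (Y : ModuleCat.{0} R) :
    ((HY Y).leftDerived 1).obj X ⟶ (KC P Y).opcycles 1 :=
  (eExt P Y).hom ≫ (KC P Y).homologyι 1

def RepExt {X : ModuleCat.{0} R} (P : ProjectiveResolution X) {Y : ModuleCat.{0} R}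
    (f : P.complex.X 1 ⟶ Y) (x : ((Ext R (ModuleCat.{0} R) 1).obj (op X)).obj Y) : Prop :=
  ∃ z : ((KC P Y).opcycles 1).unop, ((KC P Y).pOpcycles 1).unop.hom z = f ∧
    (iotaExt P Y).unop.hom z = x

variable {X X' Y Y' : ModuleCat.{0} R} (P : ProjectiveResolution X) (P' : ProjectiveResolution X')

lemma repExt_surj (x : ((Ext R (ModuleCat.{0} R) 1).obj (op X)).obj Y) :
    ∃ f : P.complex.X 1 ⟶ Y, P.complex.d 2 1 ≫ f = 0 ∧ RepExt P f x := by
  have h : Epi (iotaExt P Y).unop := by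
    have : Mono (iotaExt P Y) := by
      have := mono_of_isLimit_fork ((KC P Y).homologyIsKernel 1 0 (by simp))
      change Mono ((KC P Y).homologyι 1) at this
      exact mono_comp _ _
    exact unop_epi_of_mono _
  rw [ModuleCat.epi_iff_surjective] at h
  obtain ⟨z, hz⟩ := h x
  refine ⟨((KC P Y).pOpcycles 1).unop.hom z, ?_, z, rfl, hz⟩
  have h1 := congrArg (fun g => g.unop.hom z) ((KC P Y).d_pOpcycles 2 1)
  exact h1

lemma repExt_exists (f : P.complex.X 1 ⟶ Y) (hf : P.complex.d 2 1 ≫ f = 0) :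
    ∃ x : ((Ext R (ModuleCat.{0} R) 1).obj (op X)).obj Y, RepExt P f x := by
  have h := ShortComplex.exact_of_g_is_cokernel
    (ShortComplex.mk _ _ ((KC P Y).d_pOpcycles 2 1)) ((KC P Y).opcyclesIsCokernel 2 1 (by simp))
  have h2 := (ShortComplex.ShortExact.moduleCat_exact_iff_function_exact _).1 h.unop
  obtain ⟨z, hz⟩ := (h2 f).1 hf
  exact ⟨(iotaExt P Y).unop.hom z, z, hz, rfl⟩

lemma repExt_zero (f : P.complex.X 1 ⟶ Y) (x : ((Ext R (ModuleCat.{0} R) 1).obj (op X)).obj Y)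
    (h : RepExt P f x) : x = 0 ↔ ∃ g : P.complex.X 0 ⟶ Y, P.complex.d 1 0 ≫ g = f := by
  have hw : iotaExt P Y ≫ (KC P Y).fromOpcycles 1 0 = 0 := by
    rw [iotaExt, Category.assoc, HomologicalComplex.homologyι_comp_fromOpcycles, comp_zero]
  have hex : (ShortComplex.mk _ _ hw).Exact := by
    have h0 := ShortComplex.exact_of_f_is_kernel
      (ShortComplex.mk _ _ ((KC P Y).homologyι_comp_fromOpcycles 1 0))
      ((KC P Y).homologyIsKernel 1 0 (by simp))
    let e : ShortComplex.mk _ _ hw ≅ ShortComplex.mk _ _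
        ((KC P Y).homologyι_comp_fromOpcycles 1 0) :=
      ShortComplex.isoMk (eExt P Y) (Iso.refl _) (Iso.refl _) (Category.comp_id _).symm
        ((Category.id_comp _).trans (Category.comp_id _).symm)
    exact (ShortComplex.exact_iff_of_iso e).2 h0
  have hex2 := (ShortComplex.ShortExact.moduleCat_exact_iff_function_exact _).1 hex.unop
  have hinj : Mono ((KC P Y).pOpcycles 1).unop := unop_mono_of_epi _
  rw [ModuleCat.mono_iff_injective] at hinj
  have hp : ∀ g : P.complex.X 0 ⟶ Y, ((KC P Y).pOpcycles 1).unop.hom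
      (((KC P Y).fromOpcycles 1 0).unop.hom g) = P.complex.d 1 0 ≫ g := fun g =>
    congrArg (fun q => q.unop.hom g) ((KC P Y).p_fromOpcycles 1 0)
  obtain ⟨z, rfl, rfl⟩ := h
  constructor
  · intro h0
    obtain ⟨g, hg⟩ := (hex2 z).1 h0
    exact ⟨g, (hp g).symm.trans (congrArg ((KC P Y).pOpcycles 1).unop.hom hg)⟩
  · rintro ⟨g, hg⟩
    exact (hex2 z).2 ⟨g, hinj ((hp g).trans hg)⟩

lemma repExt_mapY (φ : Y ⟶ Y') (f : P.complex.X 1 ⟶ Y)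
    (x : ((Ext R (ModuleCat.{0} R) 1).obj (op X)).obj Y) (h : RepExt P f x) :
    RepExt P (f ≫ φ) ((((Ext R (ModuleCat.{0} R) 1).obj (op X)).map φ).hom x) := by
  obtain ⟨z, rfl, rfl⟩ := h
  let α : HY Y' ⟶ HY Y := NatTrans.rightOp ((linearYoneda R (ModuleCat.{0} R)).map φ)
  let β : KC P Y' ⟶ KC P Y := (NatTrans.mapHomologicalComplex α _).app P.complex
  refine ⟨(HomologicalComplex.opcyclesMap β 1).unop.hom z, ?_, ?_⟩
  · exact congrArg (fun q => q.unop.hom z) (HomologicalComplex.p_opcyclesMap β 1)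
  · have h1 : iotaExt P Y' ≫ HomologicalComplex.opcyclesMap β 1 =
        (NatTrans.leftDerived α 1).app X ≫ iotaExt P Y := by
      have h2 : (NatTrans.leftDerived α 1).app X = (eExt P Y').hom ≫
          HomologicalComplex.homologyMap β 1 ≫ (eExt P Y).inv :=
        ProjectiveResolution.leftDerived_app_eq α P 1
      rw [h2, iotaExt, iotaExt, Category.assoc, Category.assoc, Category.assoc,
        Iso.inv_hom_id_assoc, HomologicalComplex.homologyι_naturality]
    exact congrArg (fun q => q.unop.hom z) h1

lemma repExt_mapX (u : X' ⟶ X) (ψ : P'.complex ⟶ P.complex)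
    (comm : ψ.f 0 ≫ P.π.f 0 = P'.π.f 0 ≫ u) (f : P.complex.X 1 ⟶ Y)
    (x : ((Ext R (ModuleCat.{0} R) 1).obj (op X)).obj Y) (h : RepExt P f x) :
    RepExt P' (ψ.f 1 ≫ f) ((((Ext R (ModuleCat.{0} R) 1).map u.op).app Y).hom x) := by
  obtain ⟨z, rfl, rfl⟩ := h
  let β : KC P' Y ⟶ KC P Y := ((HY Y).mapHomologicalComplex (ComplexShape.down ℕ)).map ψ
  refine ⟨(HomologicalComplex.opcyclesMap β 1).unop.hom z, ?_, ?_⟩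
  · exact congrArg (fun q => q.unop.hom z) (HomologicalComplex.p_opcyclesMap β 1)
  · have h1 : iotaExt P' Y ≫ HomologicalComplex.opcyclesMap β 1 =
        ((HY Y).leftDerived 1).map u ≫ iotaExt P Y := by
      have h2 : ((HY Y).leftDerived 1).map u ≫ (eExt P Y).hom = (eExt P' Y).hom ≫
          HomologicalComplex.homologyMap β 1 :=
        ProjectiveResolution.isoLeftDerivedObj_hom_naturality u P' P ψ comm (HY Y) 1
      rw [iotaExt, iotaExt, ← Category.assoc, Category.assoc _ _ (HomologicalComplex.opcyclesMap β 1),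
        ← HomologicalComplex.homologyι_naturality, h2, Category.assoc]
    exact congrArg (fun q => q.unop.hom z) h1

lemma repExt_add (f : P.complex.X 1 ⟶ Y) (x : ((Ext R (ModuleCat.{0} R) 1).obj (op X)).obj Y)
    (h : RepExt P f x) (g : P.complex.X 0 ⟶ Y) : RepExt P (f + P.complex.d 1 0 ≫ g) x := by
  have hw : iotaExt P Y ≫ (KC P Y).fromOpcycles 1 0 = 0 := by
    rw [iotaExt, Category.assoc, HomologicalComplex.homologyι_comp_fromOpcycles, comp_zero]
  have hw' : (iotaExt P Y).unop.hom (((KC P Y).fromOpcycles 1 0).unop.hom g) = 0 :=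
    congrArg (fun q => q.unop.hom g) hw
  have hp : ((KC P Y).pOpcycles 1).unop.hom
      (((KC P Y).fromOpcycles 1 0).unop.hom g) = P.complex.d 1 0 ≫ g :=
    congrArg (fun q => q.unop.hom g) ((KC P Y).p_fromOpcycles 1 0)
  obtain ⟨z, rfl, rfl⟩ := h
  refine ⟨z + ((KC P Y).fromOpcycles 1 0).unop.hom g, ?_, ?_⟩
  · rw [map_add, hp]; rfl
  · rw [map_add, hw', add_zero]

abbrev pi0 : P.complex.X 0 ⟶ X := P.π.f 0

lemma res_facts : Function.Surjective (pi0 P).hom ∧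
    (∀ p, (pi0 P).hom p = 0 ↔ ∃ q, (P.complex.d 1 0).hom q = p) ∧
    (∀ p, (P.complex.d 1 0).hom p = 0 ↔ ∃ q, (P.complex.d 2 1).hom q = p) := by
  refine ⟨?_, ?_, ?_⟩
  · have : Epi (pi0 P) := inferInstanceAs (Epi (P.π.f 0))
    rwa [ModuleCat.epi_iff_surjective] at this
  · intro p
    exact (ShortComplex.ShortExact.moduleCat_exact_iff_function_exact _).1 P.exact₀ p
  · intro p
    exact (ShortComplex.ShortExact.moduleCat_exact_iff_function_exact _).1 (P.exact_succ 0) p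

lemma factor_lemma {A B Y : Type} [AddCommGroup A] [AddCommGroup B] [AddCommGroup Y] [Module R A]
    [Module R B] [Module R Y] (d : A →ₗ[R] B) (F : A →ₗ[R] Y) (h : ∀ a, d a = 0 → F a = 0) :
    ∃ b : LinearMap.range d →ₗ[R] Y, ∀ a, b ⟨d a, a, rfl⟩ = F a := by
  refine ⟨((LinearMap.ker d).liftQ F (fun a ha => h a ha)).comp
    d.quotKerEquivRange.symm.toLinearMap, fun a => ?_⟩
  have : d.quotKerEquivRange.symm ⟨d a, a, rfl⟩ = (LinearMap.ker d).mkQ a := by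
    rw [LinearEquiv.symm_apply_eq]; rfl
  rw [LinearMap.comp_apply]
  erw [this]
  rfl

abbrev resJ (J : Ideal R) : ProjectiveResolution (ModuleCat.of R (R ⧸ J)) :=
  projectiveResolution (ModuleCat.of R (R ⧸ J))

abbrev ExtJ (J : Ideal R) (Y : ModuleCat.{0} R) : ModuleCat.{0} R :=
  ((Ext R (ModuleCat.{0} R) 1).obj (op (ModuleCat.of R (R ⧸ J)))).obj Y

def Th (J : Ideal R) {Y : ModuleCat.{0} R} (f : J →ₗ[R] Y) (x : ExtJ J Y) : Prop :=
  ∃ s : (resJ J).complex.X 0 →ₗ[R] R, (∀ p, J.mkQ (s p) = (pi0 (resJ J)).hom p) ∧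
    ∃ F : (resJ J).complex.X 1 ⟶ Y, (∀ p (hp : s (((resJ J).complex.d 1 0).hom p) ∈ J),
      F.hom p = f ⟨s (((resJ J).complex.d 1 0).hom p), hp⟩) ∧ RepExt (resJ J) F x

lemma exists_s (J : Ideal R) : ∃ s : (resJ J).complex.X 0 →ₗ[R] R,
    ∀ p, J.mkQ (s p) = (pi0 (resJ J)).hom p := by
  have := (resJ J).projective 0
  have : Module.Projective R ((resJ J).complex.X 0) :=
    (IsProjective.iff_projective _).2 this
  obtain ⟨s, hs⟩ := Module.projective_lifting_property J.mkQ (pi0 (resJ J)).hom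
    (Submodule.mkQ_surjective _)
  exact ⟨s, fun p => DFunLike.congr_fun hs p⟩

lemma s_mem (J : Ideal R) (s : (resJ J).complex.X 0 →ₗ[R] R)
    (hs : ∀ p, J.mkQ (s p) = (pi0 (resJ J)).hom p) (p) :
    s (((resJ J).complex.d 1 0).hom p) ∈ J := by
  rw [← Submodule.Quotient.mk_eq_zero]
  exact (hs _).trans (((res_facts (resJ J)).2.1 _).2 ⟨p, rfl⟩)

lemma th_surj (J : Ideal R) (x : ExtJ J Y) : ∃ f : J →ₗ[R] Y, Th J f x := by
  obtain ⟨s, hs⟩ := exists_s J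
  obtain ⟨F, hF, hx⟩ := repExt_surj (resJ J) x
  obtain ⟨h1, h2, h3⟩ := res_facts (resJ J)
  obtain ⟨b, hb⟩ := factor_lemma ((resJ J).complex.d 1 0).hom F.hom (fun a ha => by
    obtain ⟨q, rfl⟩ := (h3 a).1 ha
    exact congrArg (fun g => g.hom q) hF)
  obtain ⟨e, he⟩ := h1 (J.mkQ 1)
  let T : R →ₗ[R] (resJ J).complex.X 0 := LinearMap.toSpanSingleton R _ e
  have hT : ∀ a, (pi0 (resJ J)).hom (T a) = J.mkQ a := fun a => by
    change (pi0 (resJ J)).hom (a • e) = _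
    rw [map_smul, he, ← map_smul]; simp
  have hr : ∀ j : J, T j ∈ LinearMap.range ((resJ J).complex.d 1 0).hom := fun j => by
    refine (h2 _).1 ((hT _).trans ?_)
    exact (Submodule.Quotient.mk_eq_zero _).2 j.2
  let f : J →ₗ[R] Y := b.comp ((T.comp J.subtype).codRestrict _ hr)
  have hg : ∀ p, T (s p) - p ∈ LinearMap.range ((resJ J).complex.d 1 0).hom := fun p => by
    refine (h2 _).1 ?_
    rw [map_sub, hT, hs, sub_self]
  let g : (resJ J).complex.X 0 ⟶ Y := ModuleCat.ofHom
    (b.comp ((T.comp s - LinearMap.id).codRestrict _ hg))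
  refine ⟨f, s, hs, F + (resJ J).complex.d 1 0 ≫ g, fun p hp => ?_, repExt_add _ _ _ hx g⟩
  change F.hom p + b ⟨T (s _) - ((resJ J).complex.d 1 0).hom p, _⟩ = b ⟨T (s _), _⟩
  rw [← hb, ← map_add]
  congr 1
  exact Subtype.ext (add_sub_cancel _ _)

lemma th_exists (J : Ideal R) (f : J →ₗ[R] Y) : ∃ x : ExtJ J Y, Th J f x := by
  obtain ⟨s, hs⟩ := exists_s J
  let F : (resJ J).complex.X 1 ⟶ Y := ModuleCat.ofHom
    (f.comp ((s.comp ((resJ J).complex.d 1 0).hom).codRestrict J (s_mem J s hs)))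
  have hF : (resJ J).complex.d 2 1 ≫ F = 0 := by
    ext p
    change f ⟨s (((resJ J).complex.d 1 0).hom (((resJ J).complex.d 2 1).hom p)), _⟩ = 0
    have : (((resJ J).complex.d 1 0).hom (((resJ J).complex.d 2 1).hom p)) = 0 :=
      ((res_facts (resJ J)).2.2 _).2 ⟨p, rfl⟩
    convert map_zero f
    simp [this]
  obtain ⟨x, hx⟩ := repExt_exists (resJ J) F hF
  exact ⟨x, s, hs, F, fun p hp => rfl, hx⟩

lemma th_zero (J : Ideal R) (f : J →ₗ[R] Y) (x : ExtJ J Y) (h : Th J f x) :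
    x = 0 ↔ ∃ y : Y, ∀ j : J, f j = (j : R) • y := by
  obtain ⟨s, hs, F, hF, hx⟩ := h
  obtain ⟨h1, h2, h3⟩ := res_facts (resJ J)
  rw [repExt_zero _ _ _ hx]
  constructor
  · rintro ⟨g, hg⟩
    obtain ⟨e, he⟩ := h1 (J.mkQ 1)
    have hm : s e - 1 ∈ J := by
      rw [← Submodule.Quotient.mk_eq_zero]
      change J.mkQ (s e - 1) = 0
      rw [map_sub, hs, he, sub_self]
    refine ⟨g.hom e - f ⟨s e - 1, hm⟩, fun j => ?_⟩
    have : (pi0 (resJ J)).hom ((j : R) • e) = 0 := by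
      rw [map_smul, he, ← map_smul]
      exact (Submodule.Quotient.mk_eq_zero _).2 (by simp)
    obtain ⟨q, hq⟩ := (h2 _).1 this
    have h5 := congrArg (fun u => u.hom q) hg
    change g.hom (((resJ J).complex.d 1 0).hom q) = F.hom q at h5
    rw [hF q (s_mem J s hs q)] at h5
    rw [smul_sub, ← map_smul, ← map_smul, ← hq, h5, ← map_sub]
    congr 1
    ext
    simp [hq]
    ring
  · rintro ⟨y, hy⟩
    refine ⟨ModuleCat.ofHom (s.smulRight y), ?_⟩
    ext p
    rw [hF p (s_mem J s hs p), hy]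
    rfl

lemma th_mapY (J : Ideal R) (φ : Y ⟶ Y') (f : J →ₗ[R] Y) (x : ExtJ J Y) (h : Th J f x) :
    Th J (φ.hom.comp f) ((((Ext R (ModuleCat.{0} R) 1).obj _).map φ).hom x) := by
  obtain ⟨s, hs, F, hF, hx⟩ := h
  refine ⟨s, hs, F ≫ φ, fun p hp => ?_, repExt_mapY _ φ _ _ hx⟩
  change φ.hom (F.hom p) = φ.hom (f _)
  rw [hF p hp]

lemma th_mapJ {J J' : Ideal R} (hJ : J' ≤ J)
    (u : ModuleCat.of R (R ⧸ J') ⟶ ModuleCat.of R (R ⧸ J)) (hu : ∀ a, u.hom (J'.mkQ a) = J.mkQ a)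
    (f : J →ₗ[R] Y) (x : ExtJ J Y) (h : Th J f x) :
    Th J' (f.comp (Submodule.inclusion hJ))
      ((((Ext R (ModuleCat.{0} R) 1).map u.op).app Y).hom x) := by
  obtain ⟨s, hs, F, hF, hx⟩ := h
  obtain ⟨s', hs'⟩ := exists_s J'
  let ψ := ProjectiveResolution.lift u (resJ J') (resJ J)
  have comm : ψ.f 0 ≫ (resJ J).π.f 0 = (resJ J').π.f 0 ≫ u := by
    exact ProjectiveResolution.lift_commutes_zero u (resJ J') (resJ J)
  have hx' := repExt_mapX (resJ J) (resJ J') u ψ comm F x hx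
  have hm : ∀ p, s' p - s ((ψ.f 0).hom p) ∈ J := fun p => by
    rw [← Submodule.Quotient.mk_eq_zero]
    change J.mkQ _ = 0
    rw [map_sub, hs, ← hu, hs', sub_eq_zero]
    exact congrArg (fun q => q.hom p) comm.symm
  let g : (resJ J').complex.X 0 ⟶ Y := ModuleCat.ofHom
    (f.comp ((s' - s.comp (ψ.f 0).hom).codRestrict J hm))
  refine ⟨s', hs', _, fun p hp => ?_, repExt_add _ _ _ hx' g⟩
  have hc : (ψ.f 0).hom (((resJ J').complex.d 1 0).hom p) =
      ((resJ J).complex.d 1 0).hom ((ψ.f 1).hom p) :=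
    congrArg (fun q => q.hom p) (ψ.comm 1 0).symm
  change F.hom ((ψ.f 1).hom p) + f ⟨s' (((resJ J').complex.d 1 0).hom p) -
    s ((ψ.f 0).hom (((resJ J').complex.d 1 0).hom p)), _⟩ = f ⟨_, _⟩
  rw [hF _ (s_mem J s hs _), ← map_add]
  congr 1
  ext
  simp [hc]

lemma repExt_unique (f : P.complex.X 1 ⟶ Y)
    (x x' : ((Ext R (ModuleCat.{0} R) 1).obj (op X)).obj Y)
    (h : RepExt P f x) (h' : RepExt P f x') : x = x' := by
  have hinj : Mono ((KC P Y).pOpcycles 1).unop := unop_mono_of_epi _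
  rw [ModuleCat.mono_iff_injective] at hinj
  obtain ⟨z, hz, rfl⟩ := h
  obtain ⟨z', hz', rfl⟩ := h'
  rw [hinj (hz.trans hz'.symm)]

lemma th_unique (J : Ideal R) (f : J →ₗ[R] Y) (x x' : ExtJ J Y) (h : Th J f x) (h' : Th J f x') :
    x = x' := by
  obtain ⟨s, hs, F, hF, hx⟩ := h
  obtain ⟨s', hs', F', hF', hx'⟩ := h'
  have hm : ∀ p, s' p - s p ∈ J := fun p => by
    rw [← Submodule.Quotient.mk_eq_zero]
    change J.mkQ _ = 0
    rw [map_sub, hs, hs', sub_self]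
  let g : (resJ J).complex.X 0 ⟶ Y := ModuleCat.ofHom
    (f.comp ((s' - s).codRestrict J hm))
  have h1 := repExt_add _ _ _ hx g
  have h2 : F + (resJ J).complex.d 1 0 ≫ g = F' := by
    ext p
    change F.hom p + f ⟨s' (((resJ J).complex.d 1 0).hom p) -
      s (((resJ J).complex.d 1 0).hom p), _⟩ = F'.hom p
    rw [hF _ (s_mem J s hs _), hF' _ (s_mem J s' hs' _), ← map_add]
    congr 1
    exact Subtype.ext (add_sub_cancel _ _)
  rw [h2] at h1
  exact repExt_unique _ _ _ _ h1 hx'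

lemma ext_inj_aux {Y Y' : Type} [AddCommGroup Y] [Module R Y] [AddCommGroup Y'] [Module R Y']
    (I J : Ideal R) (φ : Y →ₗ[R] Y') (f : J →ₗ[R] Y)
    (hK : ∀ y : Y, φ y = 0 → ∀ r ∈ I, r • y = 0) (y : Y) (hy : ∀ j : J, φ (f j) = (j : R) • φ y) :
    ∀ j (hj : j ∈ J), j ∈ I * J → f ⟨j, hj⟩ = j • y := by
  have key : I * J ≤ Submodule.map J.subtype
      (LinearMap.ker (f - (LinearMap.toSpanSingleton R Y y).comp J.subtype)) := by
    rw [Ideal.mul_le]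
    intro a ha b hb
    refine ⟨a • ⟨b, hb⟩, ?_, rfl⟩
    have h1 := hK (f ⟨b, hb⟩ - b • y) (by rw [map_sub, hy, map_smul, sub_self]) a ha
    rw [smul_sub, ← map_smul, smul_smul] at h1
    exact h1
  intro j hj hj'
  obtain ⟨j', h1, rfl⟩ := key hj'
  simpa [sub_eq_zero] using h1

lemma ext_inj (m : Ideal R) (φ : Y ⟶ Y') (hφ : Function.Surjective φ.hom)
    (N : ℕ) (hK : ∀ y : Y, φ.hom y = 0 → ∀ r ∈ m ^ N, r • y = 0) (k : ℕ) (x : ExtJ (m ^ k) Y)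
    (hx : (((Ext R (ModuleCat.{0} R) 1).obj _).map φ).hom x = 0)
    (u : ModuleCat.of R (R ⧸ m ^ (N + k)) ⟶ ModuleCat.of R (R ⧸ m ^ k))
    (hu : ∀ a, u.hom ((m ^ (N + k)).mkQ a) = (m ^ k).mkQ a) :
    (((Ext R (ModuleCat.{0} R) 1).map u.op).app Y).hom x = 0 := by
  obtain ⟨f, hf⟩ := th_surj (m ^ k) x
  obtain ⟨y', hy'⟩ := (th_zero _ _ _ (th_mapY _ φ f x hf)).1 hx
  obtain ⟨y, rfl⟩ := hφ y'
  have hle : m ^ (N + k) ≤ m ^ k := Ideal.pow_le_pow_right (by omega)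
  refine (th_zero _ _ _ (th_mapJ hle u hu f x hf)).2 ⟨y, ?_⟩
  rintro ⟨j, hj⟩
  exact ext_inj_aux (m ^ N) (m ^ k) φ.hom f hK y hy' j (hle hj) (by rwa [← pow_add])

lemma ext_surj [IsNoetherianRing R] (m : Ideal R) (φ : Y ⟶ Y') (hφ : Function.Surjective φ.hom)
    (N : ℕ) (hK : ∀ y : Y, φ.hom y = 0 → ∀ r ∈ m ^ N, r • y = 0) (k : ℕ) (x : ExtJ (m ^ k) Y') :
    ∃ n, ∀ (u : ModuleCat.of R (R ⧸ m ^ (n + k)) ⟶ ModuleCat.of R (R ⧸ m ^ k))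
      (_ : ∀ a, u.hom ((m ^ (n + k)).mkQ a) = (m ^ k).mkQ a),
      ∃ w : ExtJ (m ^ (n + k)) Y, (((Ext R (ModuleCat.{0} R) 1).obj _).map φ).hom w =
        (((Ext R (ModuleCat.{0} R) 1).map u.op).app Y').hom x := by
  obtain ⟨f', hf'⟩ := th_surj (m ^ k) x
  obtain ⟨r, p, hp⟩ := Module.Finite.exists_fin' R (m ^ k : Ideal R)
  obtain ⟨g, hg⟩ := Module.projective_lifting_property φ.hom (f'.comp p) hφ
  obtain ⟨k0, hk0⟩ := Ideal.exists_pow_inf_eq_pow_smul m (LinearMap.ker p)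
  obtain ⟨n, hn⟩ : ∃ n, n = k0 + N := ⟨_, rfl⟩
  have hk1 := hk0 n (by omega)
  refine ⟨n, fun u hu => ?_⟩
  let A : Submodule R (Fin r → R) := m ^ n • ⊤
  let pt : (Fin r → R) →ₗ[R] R := (Submodule.subtype (m ^ k)).comp p
  obtain ⟨b, hb⟩ := factor_lemma (pt.comp A.subtype) (g.comp A.subtype) (by
    rintro ⟨a, ha⟩ h0
    have h1 : a ∈ LinearMap.ker p := by
      rw [LinearMap.mem_ker]
      exact Subtype.ext h0
    have h2 : a ∈ m ^ n • (⊤ : Submodule R (Fin r → R)) ⊓ LinearMap.ker p := ⟨ha, h1⟩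
    rw [hk1, show n - k0 = N by omega] at h2
    have h3 : m ^ N • (m ^ k0 • ⊤ ⊓ LinearMap.ker p) ≤ LinearMap.ker g := by
      rw [Submodule.smul_le]
      intro c hc z hz
      rw [LinearMap.mem_ker, map_smul]
      refine hK _ ?_ c hc
      have := DFunLike.congr_fun hg z
      refine this.trans ?_
      rw [LinearMap.comp_apply, LinearMap.mem_ker.1 hz.2, map_zero]
    exact h3 h2)
  have hrange : m ^ (n + k) ≤ LinearMap.range (pt.comp A.subtype) := by
    have h1 : LinearMap.range pt = m ^ k := by
      rw [LinearMap.range_comp, LinearMap.range_eq_top.2 hp, Submodule.map_top,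
        Submodule.range_subtype]
    rw [LinearMap.range_comp, Submodule.range_subtype, Submodule.map_smul'', Submodule.map_top, h1,
      pow_add]
    exact le_refl _
  have hle : m ^ (n + k) ≤ m ^ k := Ideal.pow_le_pow_right (by omega)
  obtain ⟨w, hw⟩ := th_exists (m ^ (n + k)) (b.comp (Submodule.inclusion hrange))
  refine ⟨w, ?_⟩
  have e1 := th_mapY _ φ _ _ hw
  have e2 := th_mapJ hle u hu f' x hf'
  have e3 : φ.hom.comp (b.comp (Submodule.inclusion hrange)) =
      f'.comp (Submodule.inclusion hle) := by
    ext ⟨j, hj⟩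
    obtain ⟨a, ha⟩ := hrange hj
    have h4 := hb a
    have h5 := DFunLike.congr_fun hg a.1
    have h6 : (Submodule.inclusion hrange ⟨j, hj⟩) = ⟨(pt.comp A.subtype) a, a, rfl⟩ :=
      Subtype.ext ha.symm
    rw [LinearMap.comp_apply, LinearMap.comp_apply, h6, h4]
    refine h5.trans ?_
    rw [LinearMap.comp_apply, LinearMap.comp_apply]
    congr 1
    exact Subtype.ext ha
  rw [e3] at e1
  exact th_unique _ _ _ _ e1 e2

abbrev ofHom' {J J' : Ideal R} (h : J' ≤ J) :
    ModuleCat.of R (R ⧸ J') ⟶ ModuleCat.of R (R ⧸ J) :=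
  ModuleCat.ofHom (Submodule.mapQ _ _ LinearMap.id h)

lemma colim_map_bij {K : Type} [SmallCategory K] [IsFiltered K]
    (D : K ⥤ (ModuleCat.{0} R ⥤ ModuleCat.{0} R)) (c : Cocone D) (hcc : IsColimit c)
    (φ : Y ⟶ Y')
    (hinj : ∀ (k : K) (x : (D.obj k).obj Y), ((D.obj k).map φ).hom x = 0 →
      ∃ (k' : K) (i : k ⟶ k'), ((D.map i).app Y).hom x = 0)
    (hsurj : ∀ (k : K) (x : (D.obj k).obj Y'), ∃ (k' : K) (i : k ⟶ k') (w : (D.obj k').obj Y),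
      ((D.obj k').map φ).hom w = ((D.map i).app Y').hom x) :
    Function.Bijective (c.pt.map φ).hom := by
  have hc : ∀ M : ModuleCat.{0} R, IsColimit (((evaluation _ _).obj M).mapCocone c) :=
    fun M => isColimitOfPreserves _ hcc
  have hnat : ∀ (k : K) (x : (D.obj k).obj Y), (c.pt.map φ).hom
      (((c.ι.app k).app Y).hom x) = ((c.ι.app k).app Y').hom (((D.obj k).map φ).hom x) := by
    intro k x
    exact (congrArg (fun q => q.hom x) ((c.ι.app k).naturality φ)).symm
  have hw : ∀ (M : ModuleCat.{0} R) (k k' : K) (i : k ⟶ k') (x : (D.obj k).obj M),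
      ((c.ι.app k').app M).hom (((D.map i).app M).hom x) = ((c.ι.app k).app M).hom x := by
    intro M k k' i x
    exact congrArg (fun q => (q.app M).hom x) (c.w i)
  constructor
  · rw [injective_iff_map_eq_zero]
    intro a ha
    obtain ⟨k, x, rfl⟩ := Concrete.isColimit_exists_rep _ (hc Y) a
    have h1 : ((c.ι.app k).app Y').hom (((D.obj k).map φ).hom x) =
        ((c.ι.app k).app Y').hom 0 := by
      rw [← hnat, map_zero]; exact ha
    obtain ⟨k', f, g, hfg⟩ := Concrete.isColimit_exists_of_rep_eq _ (hc Y') _ _ h1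
    have h2 : ((D.map f).app Y').hom (((D.obj k).map φ).hom x) = 0 :=
      hfg.trans (map_zero ((D.map g).app Y').hom)
    have h3 : ((D.obj k').map φ).hom (((D.map f).app Y).hom x) = 0 :=
      (congrArg (fun q => q.hom x) ((D.map f).naturality φ)).symm.trans h2
    obtain ⟨k2, i, h4⟩ := hinj _ _ h3
    have h6 : ((c.ι.app k).app Y).hom x = 0 := by
      rw [← hw Y k k' f x, ← hw Y k' k2 i, h4, map_zero]
    exact h6
  · intro a
    obtain ⟨k, x, rfl⟩ := Concrete.isColimit_exists_rep _ (hc Y') a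
    obtain ⟨k', i, w, hwx⟩ := hsurj k x
    refine ⟨((c.ι.app k').app Y).hom w, ?_⟩
    rw [hnat, hwx]
    exact hw Y' k k' i x

lemma locCoh_map_bij [IsNoetherianRing R] (m : Ideal R) (φ : Y ⟶ Y')
    (hφ : Function.Surjective φ.hom)
    (N : ℕ) (hK : ∀ y : Y, φ.hom y = 0 → ∀ r ∈ m ^ N, r • y = 0) :
    IsIso ((localCohomology m 1).map φ) := by
  refine (ConcreteCategory.isIso_iff_bijective _).2 ?_
  refine colim_map_bij (localCohomology.diagram (localCohomology.idealPowersDiagram m) 1)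
    (colimit.cocone _) (colimit.isColimit _) φ ?_ ?_
  · intro k x hx
    refine ⟨op (op (N + k.unop.unop)),
      (homOfLE (by change k.unop.unop ≤ N + k.unop.unop; omega)).op.op, ?_⟩
    exact ext_inj m φ hφ N hK k.unop.unop x hx
        (ofHom' (Ideal.pow_le_pow_right (by omega))) (fun a => rfl)
  · intro k x
    obtain ⟨n, hn⟩ := ext_surj m φ hφ N hK k.unop.unop x
    obtain ⟨w, hwx⟩ := hn (ofHom' (Ideal.pow_le_pow_right (by omega))) (fun a => rfl)
    exact ⟨op (op (n + k.unop.unop)),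
      (homOfLE (by change k.unop.unop ≤ n + k.unop.unop; omega)).op.op, w, hwx⟩
end ExtPart

section GraphPart

def OddSeq {V : Type} (G : SimpleGraph V) (m : ℕ) (c : ℕ → V) : Prop :=
  Odd m ∧ (∀ i < m, G.Adj (c i) (c (i + 1))) ∧ c m = c 0

lemma oddSeq_split {V : Type} {G : SimpleGraph V} {m : ℕ} {c : ℕ → V} (h : OddSeq G m c)
    {i j : ℕ} (hij : i < j) (hj : j < m) (hc : c i = c j) : ∃ m' < m, ∃ c', OddSeq G m' c' := by
  obtain ⟨hm, ha, h0⟩ := h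
  rcases Nat.even_or_odd (j - i) with he | ho
  · refine ⟨m - (j - i), by omega, fun n => if n ≤ i then c n else c (n + (j - i)), ?_, ?_, ?_⟩
    · exact Nat.Odd.sub_even (by omega) hm he
    · intro n hn
      rcases lt_trichotomy n i with h | h | h
      · simp only [show n ≤ i by omega, show n + 1 ≤ i by omega, if_true]
        exact ha n (by omega)
      · subst h
        simp only [le_refl, show ¬ (n + 1 ≤ n) by omega, if_true, if_false]
        rw [hc, show n + 1 + (j - n) = j + 1 by omega]
        exact ha j hj
      · simp only [show ¬ n ≤ i by omega, show ¬ n + 1 ≤ i by omega, if_false]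
        rw [show n + 1 + (j - i) = n + (j - i) + 1 by omega]
        exact ha _ (by omega)
    · simp only [show ¬ (m - (j - i) ≤ i) by omega, Nat.zero_le, if_true, if_false]
      rw [show m - (j - i) + (j - i) = m by omega, h0]
  · refine ⟨j - i, by omega, fun n => c (i + n), ho, ?_, ?_⟩
    · intro n hn
      exact ha (i + n) (by omega)
    · simp only [Nat.add_zero]
      rw [show i + (j - i) = j by omega, hc]

lemma exists_oddCycle {V : Type} (G : SimpleGraph V) (h : ¬ G.Colorable 2) :
    ∃ (m : ℕ) (c : ZMod m → V), IsOddCycle G m c := by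
  classical
  rw [SimpleGraph.two_colorable_iff_forall_loop_even] at h
  push Not at h
  obtain ⟨u, w, hw⟩ := h
  have hex : ∃ m, ∃ c, OddSeq G m c := by
    refine ⟨w.length, w.getVert, by simpa using hw, fun i hi => w.adj_getVert_succ hi, ?_⟩
    simp
  obtain ⟨c, hc⟩ := Nat.find_spec hex
  set m := Nat.find hex with hmdef
  have hmin : ∀ m' < m, ¬ ∃ c, OddSeq G m' c := fun m' h => Nat.find_min hex h
  have hinj : ∀ i j, i < j → j < m → c i ≠ c j := by
    intro i j hij hj hcc
    obtain ⟨m', hm', c', hc'⟩ := oddSeq_split hc hij hj hcc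
    exact hmin m' hm' ⟨c', hc'⟩
  clear_value m
  obtain ⟨hm, ha, h0⟩ := hc
  have hm1 : m ≠ 1 := by
    rintro rfl
    have := ha 0 (by omega)
    simp only [Nat.zero_add] at this
    rw [h0] at this
    exact G.loopless.irrefl _ this
  have hm3 : 3 ≤ m := by
    obtain ⟨q, hq⟩ := hm
    omega
  have : NeZero m := ⟨by omega⟩
  refine ⟨m, fun i => c i.val, hm, hm3, ?_, ?_⟩
  · intro i j hij
    have hi := ZMod.val_lt i
    have hj := ZMod.val_lt j
    apply ZMod.val_injective
    rcases lt_trichotomy i.val j.val with h | h | h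
    · exact (hinj _ _ h hj hij).elim
    · exact h
    · exact (hinj _ _ h hi hij.symm).elim
  · intro i
    have hi := ZMod.val_lt i
    have h1 := ha _ hi
    have : Fact (1 < m) := ⟨by omega⟩
    have h2 : (i + 1).val = (i.val + 1) % m := by
      rw [ZMod.val_add, ZMod.val_one]
    change G.Adj (c i.val) (c (i + 1).val)
    rw [h2]
    by_cases h3 : i.val + 1 = m
    · have h4 : c ((i.val + 1) % m) = c (i.val + 1) := by
        have : (i.val + 1) % m = 0 := by simp [h3]
        rw [this, h3, h0]
      rw [h4]; exact h1
    · rw [Nat.mod_eq_of_lt (by omega)]; exact h1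

lemma exists_color {V : Type} (Γ : SimpleGraph V)
    (hdom : ∀ (m : ℕ) (c : ZMod m → V), IsOddCycle Γ m c → Dominating Γ (Set.range c)) (v : V) :
    ∃ C : V → Bool, ∀ i j, i ≠ v → ¬ Γ.Adj v i → j ≠ v → ¬ Γ.Adj v j → Γ.Adj i j → C i ≠ C j := by
  classical
  let s : Set V := {i | i ≠ v ∧ ¬ Γ.Adj v i}
  have h2 : (Γ.induce s).Colorable 2 := by
    by_contra h
    obtain ⟨m, c, hm, hm3, hinj, hadj⟩ := exists_oddCycle _ h
    have := hdom m (fun i => (c i : V)) ⟨hm, hm3, fun i j hij => hinj (Subtype.ext hij),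
      fun i => hadj i⟩ v (by
        rintro ⟨i, hi⟩
        exact (c i).2.1 hi)
    obtain ⟨_, ⟨i, rfl⟩, hu⟩ := this
    exact (c i).2.2 hu.symm
  obtain ⟨C⟩ := h2
  refine ⟨fun i => if h : i ∈ s then decide (C ⟨i, h⟩ = 0) else false, ?_⟩
  intro i j hi hi' hj hj' hij
  have his : i ∈ s := ⟨hi, hi'⟩
  have hjs : j ∈ s := ⟨hj, hj'⟩
  have hne : C ⟨i, his⟩ ≠ C ⟨j, hjs⟩ := C.valid (v := ⟨i, his⟩) (w := ⟨j, hjs⟩) hij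
  simp only [his, hjs, dif_pos]
  intro hh
  apply hne
  have hh' : (C ⟨i, his⟩ = 0) ↔ (C ⟨j, hjs⟩ = 0) := by simpa using hh
  have e1 : ∀ z w : Fin 2, (z = 0 ↔ w = 0) → z = w := by decide
  exact e1 _ _ hh'

lemma exists_maxIndep {σ : Type} [Fintype σ] [DecidableEq σ] (Γ : SimpleGraph σ) (F0 : Finset σ)
    (h : IsIndep Γ F0) : ∃ F, IsMaxIndep Γ F ∧ F0 ⊆ F := by
  obtain ⟨F, hle, hF⟩ := (Set.toFinite {F : Finset σ | IsIndep Γ F}).exists_le_maximal h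
  refine ⟨F, ⟨hF.1, fun G hG hFG => ?_⟩, hle⟩
  exact le_antisymm (hF.2 hG hFG) hFG

open Classical in
lemma konig_mem (k : Type) [Field k] {σ : Type} [Fintype σ] [DecidableEq σ]
    (Γ : SimpleGraph σ) (b : σ → ℕ) (L R' : Finset σ) (hLR : Disjoint L R') (t : ℕ)
    (hS : ∀ S ⊆ L, t ≤ ∑ i ∈ L \ S, b i + ∑ i ∈ R'.filter (fun r => ∃ l ∈ S, Γ.Adj l r), b i) :
    ∏ i, (X i : MvPolynomial σ k) ^ b i ∈ edgeIdeal k Γ ^ t := by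
  let W := Σ i : σ, Fin (b i)
  let WS : Finset σ → Finset W := fun A => A.sigma (fun i => (Finset.univ : Finset (Fin (b i))))
  have hWS : ∀ A, (WS A).card = ∑ i ∈ A, b i := by
    intro A
    refine (Finset.card_sigma _ _).trans ?_
    simp
  have hmW : ∀ A (w : W), w ∈ WS A ↔ w.1 ∈ A := by
    intro A w
    refine Finset.mem_sigma.trans ?_
    simp
  have htL : t ≤ ∑ i ∈ L, b i := by
    have := hS ∅ (Finset.empty_subset _)
    simpa using this
  obtain ⟨d, hd⟩ : ∃ d, ∑ i ∈ L, b i = t + d := Nat.exists_eq_add_of_le htL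
  let ι := {w : W // w ∈ WS L}
  have hι : Fintype.card ι = t + d := by
    rw [← hd, ← hWS]; exact Fintype.card_coe _
  let nb : ι → Finset (W ⊕ Fin d) := fun w =>
    (WS (R'.filter (fun r => Γ.Adj w.1.1 r))).disjSum Finset.univ
  have hall : ∀ s : Finset ι, s.card ≤ (s.biUnion nb).card := by
    intro s
    rcases s.eq_empty_or_nonempty with rfl | ⟨w0, hw0⟩
    · simp
    let S := s.image (fun w => w.1.1)
    have hSL : S ⊆ L := by
      intro i hi
      obtain ⟨w, hw, rfl⟩ := Finset.mem_image.1 hi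
      exact (hmW _ _).1 w.2
    have h1 : s.card ≤ ∑ i ∈ S, b i := by
      rw [← hWS, ← Finset.card_image_of_injective s Subtype.val_injective]
      apply Finset.card_le_card
      intro w hw
      obtain ⟨w', hw', rfl⟩ := Finset.mem_image.1 hw
      exact (hmW _ _).2 (Finset.mem_image_of_mem _ hw')
    have h2 : (WS (R'.filter (fun r => ∃ l ∈ S, Γ.Adj l r))).disjSum (Finset.univ : Finset (Fin d))
        ⊆ s.biUnion nb := by
      intro z hz
      rw [Finset.mem_biUnion]
      rcases z with z | z
      · rw [Finset.inl_mem_disjSum, hmW, Finset.mem_filter] at hz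
        obtain ⟨hz1, l, hl, hlz⟩ := hz
        obtain ⟨w, hw, rfl⟩ := Finset.mem_image.1 hl
        refine ⟨w, hw, ?_⟩
        rw [Finset.inl_mem_disjSum, hmW, Finset.mem_filter]
        exact ⟨hz1, hlz⟩
      · exact ⟨w0, hw0, by simp [nb]⟩
    have h3 := Finset.card_le_card h2
    rw [Finset.card_disjSum, hWS, Finset.card_univ, Fintype.card_fin] at h3
    have h4 := hS S hSL
    have h5 := Finset.sum_sdiff (f := b) hSL
    omega
  obtain ⟨f, hfinj, hf⟩ := (Finset.all_card_le_biUnion_card_iff_exists_injective nb).1 hall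
  let T : Finset ι := Finset.univ.filter (fun w => (f w).isLeft)
  let g : ι → W := fun w => Sum.elim id (fun _ => w.1) (f w)
  have hg : ∀ w ∈ T, f w = Sum.inl (g w) := by
    intro w hw
    have := (Finset.mem_filter.1 hw).2
    obtain ⟨y, hy⟩ := Sum.isLeft_iff.1 this
    simp [g, hy]
  have hgR : ∀ w ∈ T, (g w).1 ∈ R' ∧ Γ.Adj w.1.1 (g w).1 := by
    intro w hw
    have := hf w
    rw [hg w hw, Finset.inl_mem_disjSum, hmW, Finset.mem_filter] at this
    exact this
  have hT : t ≤ T.card := by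
    have h1 := Finset.card_filter_add_card_filter_not (s := (Finset.univ : Finset ι))
      (fun w => ((f w).isLeft = true))
    rw [Finset.card_univ, hι] at h1
    have h2 : (Finset.univ.filter (fun w : ι => ¬ ((f w).isLeft = true))).card ≤
        ((Finset.univ : Finset (Fin d)).map ⟨(Sum.inr : Fin d → W ⊕ Fin d), Sum.inr_injective⟩).card := by
      refine Finset.card_le_card_of_injOn f ?_ hfinj.injOn
      intro w hw
      have := (Finset.mem_filter.1 hw).2
      rcases hfw : f w with y | y
      · rw [hfw] at this; simp at this
      · simp
    rw [Finset.card_map, Finset.card_univ, Fintype.card_fin] at h2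
    change t ≤ (Finset.univ.filter _).card
    omega
  have hmem : ∏ w ∈ T, ((X w.1.1 : MvPolynomial σ k) * X (g w).1) ∈ edgeIdeal k Γ ^ t := by
    refine Ideal.pow_le_pow_right hT ?_
    rw [← Finset.prod_const]
    refine Ideal.prod_mem_prod (fun w hw => Ideal.subset_span ?_)
    exact ⟨_, _, (hgR w hw).2, rfl⟩
  refine Ideal.mem_of_dvd _ ?_ hmem
  have hW : ∏ i, (X i : MvPolynomial σ k) ^ b i = ∏ w : W, X w.1 := by
    rw [Fintype.prod_sigma]
    simp
  have hginj : Set.InjOn g T := by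
    intro w hw w' hw' h
    apply hfinj
    rw [hg w hw, hg w' hw', h]
  have hdisj : Disjoint (T.image Subtype.val) (T.image g) := by
    rw [Finset.disjoint_left]
    intro w hw hw'
    obtain ⟨u, hu, rfl⟩ := Finset.mem_image.1 hw
    obtain ⟨u', hu', h⟩ := Finset.mem_image.1 hw'
    have h1 := (hmW _ _).1 u.2
    have h2 := (hgR u' hu').1
    rw [h] at h2
    exact Finset.disjoint_left.1 hLR h1 h2
  rw [hW, Finset.prod_mul_distrib,
    ← Finset.prod_image (s := T) (g := Subtype.val) (f := fun w : W => (X w.1 : MvPolynomial σ k))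
      Subtype.val_injective.injOn,
    ← Finset.prod_image (s := T) (g := g) (f := fun w : W => (X w.1 : MvPolynomial σ k)) hginj,
    ← Finset.prod_union hdisj]
  exact Finset.prod_dvd_prod_of_subset _ _ _ (Finset.subset_univ _)

open Classical in
lemma mono_mem (k : Type) [Field k] {σ : Type} [Fintype σ] [DecidableEq σ]
    (Γ : SimpleGraph σ)
    (hdom : ∀ (m : ℕ) (c : ZMod m → σ), IsOddCycle Γ m c → Dominating Γ (Set.range c))
    (t : ℕ) (a : σ → ℕ) (ha : ∀ F, IsMaxIndep Γ F → t ≤ ∑ i ∈ Fᶜ, a i) (v : σ) :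
    (X v : MvPolynomial σ k) ^ t * ∏ i, (X i : MvPolynomial σ k) ^ a i ∈ edgeIdeal k Γ ^ t := by
  obtain ⟨C, hC⟩ := exists_color Γ hdom v
  have hprod : (X v : MvPolynomial σ k) ^ t * ∏ i, (X i : MvPolynomial σ k) ^ a i =
      ∏ i, (X i : MvPolynomial σ k) ^ (a i + if i = v then t else 0) := by
    simp only [pow_add, Finset.prod_mul_distrib]
    rw [mul_comm]
    congr 1
    rw [Finset.prod_eq_single v]
    · simp
    · intro i _ hi; simp [hi]
    · simp
  rw [hprod]
  refine konig_mem k Γ _ (Finset.univ.filter (fun i => i = v ∨ (¬ Γ.Adj v i ∧ C i = true)))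
    (Finset.univ.filter (fun i => i ≠ v ∧ (Γ.Adj v i ∨ C i = false))) ?_ t ?_
  · rw [Finset.disjoint_left]
    intro i hi hi'
    simp only [Finset.mem_filter, Finset.mem_univ, true_and] at hi hi'
    rcases hi with h | ⟨h, h'⟩
    · exact hi'.1 h
    · rcases hi'.2 with h2 | h2
      · exact h h2
      · rw [h'] at h2; cases h2
  · intro S hS
    set L := Finset.univ.filter (fun i => i = v ∨ (¬ Γ.Adj v i ∧ C i = true)) with hL
    set R' := Finset.univ.filter (fun i => i ≠ v ∧ (Γ.Adj v i ∨ C i = false)) with hR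
    have memL : ∀ i, i ∈ L ↔ i = v ∨ (¬ Γ.Adj v i ∧ C i = true) := by intro i; simp [hL]
    have memR : ∀ i, i ∈ R' ↔ i ≠ v ∧ (Γ.Adj v i ∨ C i = false) := by intro i; simp [hR]
    by_cases hv : v ∈ S
    · let F0 := S ∪ R'.filter (fun r => ¬ ∃ l ∈ S, Γ.Adj l r)
      have hF0 : IsIndep Γ F0 := by
        have hSS : ∀ i ∈ S, ∀ j ∈ S, ¬ Γ.Adj i j := by
          intro i hi j hj hij
          have h1 := (memL i).1 (hS hi)
          have h2 := (memL j).1 (hS hj)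
          by_cases hiv : i = v
          · subst hiv
            rcases h2 with rfl | h2
            · exact Γ.loopless.irrefl _ hij
            · exact h2.1 hij
          · by_cases hjv : j = v
            · subst hjv
              rcases h1 with h1 | h1
              · exact hiv h1
              · exact h1.1 hij.symm
            · have h1' := h1.resolve_left hiv
              have h2' := h2.resolve_left hjv
              exact hC i j hiv h1'.1 hjv h2'.1 hij (h1'.2.trans h2'.2.symm)
        intro i hi j hj hij
        rcases Finset.mem_union.1 hi with hi | hi <;> rcases Finset.mem_union.1 hj with hj | hj
        · exact hSS i hi j hj hij
        · exact (Finset.mem_filter.1 hj).2 ⟨i, hi, hij⟩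
        · exact (Finset.mem_filter.1 hi).2 ⟨j, hj, hij.symm⟩
        · obtain ⟨hi1, hi2⟩ := Finset.mem_filter.1 hi
          obtain ⟨hj1, hj2⟩ := Finset.mem_filter.1 hj
          rw [memR] at hi1 hj1
          have hi3 : ¬ Γ.Adj v i := fun h => hi2 ⟨v, hv, h⟩
          have hj3 : ¬ Γ.Adj v j := fun h => hj2 ⟨v, hv, h⟩
          exact hC i j hi1.1 hi3 hj1.1 hj3 hij
            ((hi1.2.resolve_left hi3).trans (hj1.2.resolve_left hj3).symm)
      obtain ⟨F, hF, hsub⟩ := exists_maxIndep Γ F0 hF0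
      refine (ha F hF).trans ?_
      have hcov : Fᶜ ⊆ (L \ S) ∪ R'.filter (fun r => ∃ l ∈ S, Γ.Adj l r) := by
        intro i hi
        rw [Finset.mem_compl] at hi
        have hi0 : i ∉ F0 := fun h => hi (hsub h)
        rw [Finset.mem_union, Finset.mem_filter (s := R'), not_or] at hi0
        rw [Finset.mem_union, Finset.mem_sdiff, Finset.mem_filter (s := R')]
        by_cases hiL : i ∈ L
        · exact Or.inl ⟨hiL, hi0.1⟩
        · have hiR : i ∈ R' := by
            rw [memL] at hiL
            rw [memR]
            push Not at hiL
            refine ⟨hiL.1, ?_⟩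
            by_cases h : Γ.Adj v i
            · exact Or.inl h
            · exact Or.inr (by simpa using hiL.2 h)
          right
          refine ⟨hiR, ?_⟩
          by_contra h
          exact hi0.2 ⟨hiR, h⟩
      calc ∑ i ∈ Fᶜ, a i ≤ ∑ i ∈ Fᶜ, (a i + if i = v then t else 0) :=
            Finset.sum_le_sum (fun i _ => Nat.le_add_right _ _)
        _ ≤ ∑ i ∈ (L \ S) ∪ R'.filter (fun r => ∃ l ∈ S, Γ.Adj l r),
              (a i + if i = v then t else 0) := Finset.sum_le_sum_of_subset hcov
        _ ≤ _ := by
            rw [← Finset.sum_union_inter]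
            exact Nat.le_add_right _ _
    · have hvL : v ∈ L \ S := by
        rw [Finset.mem_sdiff, memL]
        exact ⟨Or.inl rfl, hv⟩
      have := Finset.single_le_sum (f := fun i => a i + if i = v then t else 0)
        (fun i _ => Nat.zero_le _) hvL
      simp only [if_true] at this
      omega

lemma PF_pow_support (k : Type) [Field k] {σ : Type} [Fintype σ] [DecidableEq σ]
    (F : Finset σ) (t : ℕ) (f : MvPolynomial σ k) (hf : f ∈ PF k F ^ t) :
    ∀ a ∈ f.support, t ≤ ∑ i ∈ Fᶜ, a i := by
  classical
  have hPF : PF k F = Ideal.span (X '' ((↑(Fᶜ) : Set σ))) := by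
    rw [PF]; congr 1; ext m; simp [eq_comm]
  induction t generalizing f with
  | zero => intro a _; exact Nat.zero_le _
  | succ t ih =>
    rw [pow_succ] at hf
    refine Submodule.mul_induction_on hf ?_ ?_
    · intro p hp q hq a ha
      obtain ⟨b, hb, c, hc, rfl⟩ := Finset.mem_add.1 (MvPolynomial.support_mul p q ha)
      have h1 := ih p hp b hb
      rw [hPF, MvPolynomial.mem_ideal_span_X_image] at hq
      obtain ⟨i, hi, hi2⟩ := hq c hc
      have h2 := Finset.single_le_sum (f := fun i => c i) (fun i _ => Nat.zero_le _)
        (Finset.mem_coe.1 hi)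
      simp only [Finsupp.add_apply, Finset.sum_add_distrib]
      omega
    · intro p q hp hq a ha
      rcases Finset.mem_union.1 (MvPolynomial.support_add ha) with h | h
      · exact hp a h
      · exact hq a h

lemma X_pow_mul_mem (k : Type) [Field k] {σ : Type} [Fintype σ] [DecidableEq σ]
    (Γ : SimpleGraph σ)
    (hdom : ∀ (m : ℕ) (c : ZMod m → σ), IsOddCycle Γ m c → Dominating Γ (Set.range c))
    (t : ℕ) (f : MvPolynomial σ k) (hf : f ∈ symbPow k Γ t) (v : σ) :
    (X v : MvPolynomial σ k) ^ t * f ∈ edgeIdeal k Γ ^ t := by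
  rw [f.as_sum, Finset.mul_sum]
  refine Ideal.sum_mem _ (fun a ha => ?_)
  rw [monomial_eq, Finsupp.prod_fintype _ _ (by simp), mul_left_comm]
  refine Ideal.mul_mem_left _ _ (mono_mem k Γ hdom t a ?_ v)
  intro F hF
  refine PF_pow_support k F t f ?_ a ha
  have : f ∈ ⨅ F ∈ { F : Finset σ | IsMaxIndep Γ F }, PF k F ^ t := hf
  simp only [Submodule.mem_iInf] at this
  exact this F hF

lemma edge_le_symb (k : Type) [Field k] {σ : Type} [Fintype σ] [DecidableEq σ]
    (Γ : SimpleGraph σ) (t : ℕ) : edgeIdeal k Γ ^ t ≤ symbPow k Γ t := by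
  refine le_iInf₂ (fun F hF => Ideal.pow_right_mono ?_ t)
  rw [edgeIdeal, Ideal.span_le]
  rintro _ ⟨i, j, hij, rfl⟩
  by_cases hi : i ∈ F
  · have hj : j ∉ F := fun hj => hF.1 i hi j hj hij
    exact Ideal.mul_mem_left _ _ (Ideal.subset_span ⟨j, hj, rfl⟩)
  · exact Ideal.mul_mem_right _ _ (Ideal.subset_span ⟨i, hi, rfl⟩)

lemma exists_pow_mul_mem (k : Type) [Field k] {σ : Type} [Fintype σ] [DecidableEq σ]
    (Γ : SimpleGraph σ)
    (hdom : ∀ (m : ℕ) (c : ZMod m → σ), IsOddCycle Γ m c → Dominating Γ (Set.range c))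
    (t : ℕ) : ∃ N, ∀ r ∈ maxIdeal k σ ^ N, ∀ f ∈ symbPow k Γ t, r * f ∈ edgeIdeal k Γ ^ t := by
  let Q : Ideal (MvPolynomial σ k) :=
    { carrier := {r | ∀ f ∈ symbPow k Γ t, r * f ∈ edgeIdeal k Γ ^ t}
      add_mem' := fun {a b} ha hb f hf => by
        rw [add_mul]; exact Ideal.add_mem _ (ha f hf) (hb f hf)
      zero_mem' := fun f hf => by rw [zero_mul]; exact Ideal.zero_mem _
      smul_mem' := fun c a ha f hf => by
        rw [smul_eq_mul, mul_assoc]; exact Ideal.mul_mem_left _ _ (ha f hf) }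
  have h1 : maxIdeal k σ ≤ Q.radical := by
    rw [maxIdeal, Ideal.span_le]
    rintro _ ⟨v, rfl⟩
    exact ⟨t, fun f hf => X_pow_mul_mem k Γ hdom t f hf v⟩
  obtain ⟨N, hN⟩ := Ideal.exists_pow_le_of_le_radical_of_fg h1 (IsNoetherian.noetherian _)
  exact ⟨N, fun r hr => hN hr⟩

end GraphPart

section FinLenPart

lemma maxIdeal_isMaximal (k : Type) [Field k] (σ : Type) : (maxIdeal k σ).IsMaximal := by
  have h : maxIdeal k σ = RingHom.ker (constantCoeff (R := k) (σ := σ)) := by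
    ext f
    rw [maxIdeal, ← Set.image_univ, mem_ideal_span_X_image, RingHom.mem_ker]
    constructor
    · intro h
      by_contra h0
      obtain ⟨i, _, hi⟩ := h 0 (by rw [mem_support_iff]; exact h0)
      exact hi rfl
    · intro h m hm
      by_contra h1
      push Not at h1
      have : m = 0 := by
        ext i; exact h1 i (Set.mem_univ _)
      subst this
      exact (mem_support_iff.1 hm) h
  rw [h]
  exact RingHom.ker_isMaximal_of_surjective _ (fun a => ⟨C a, by simp⟩)

lemma finLen_of_killed {R : Type} [CommRing R] [IsNoetherianRing R] (m : Ideal R)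
    [hm : m.IsMaximal] (N : ℕ) (M : Type) [AddCommGroup M] [Module R M] [Module.Finite R M]
    (hk : ∀ r ∈ m ^ N, ∀ x : M, r • x = 0) : IsFiniteLength R M := by
  have h0 : Ring.KrullDimLE 0 (R ⧸ m ^ N) := by
    rw [Ring.krullDimLE_zero_iff]
    intro P hP
    have h1 : m ≤ P.comap (Ideal.Quotient.mk (m ^ N)) := by
      have : m ^ N ≤ P.comap (Ideal.Quotient.mk (m ^ N)) := by
        intro x hx
        rw [Ideal.mem_comap, Ideal.Quotient.eq_zero_iff_mem.2 hx]
        exact Ideal.zero_mem _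
      exact Ideal.IsPrime.le_of_pow_le this
    have h2 := hm.eq_of_le (Ideal.IsPrime.ne_top (Ideal.comap_isPrime _ P)) h1
    have h3 : (P.comap (Ideal.Quotient.mk (m ^ N))).IsMaximal := h2 ▸ hm
    have h4 := Ideal.map_comap_of_surjective _ (Ideal.Quotient.mk_surjective (I := m ^ N)) P
    have h5 := Ideal.map_eq_top_or_isMaximal_of_surjective _
      (Ideal.Quotient.mk_surjective (I := m ^ N)) h3
    rw [h4] at h5
    exact h5.resolve_left hP.ne_top
  have hart : IsArtinianRing (R ⧸ m ^ N) := by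
    rw [isArtinianRing_iff_isNoetherianRing_krullDimLE_zero]
    exact ⟨inferInstance, h0⟩
  rw [isFiniteLength_iff_isNoetherian_isArtinian]
  refine ⟨inferInstance, ?_⟩
  have htor : Module.IsTorsionBySet R M (m ^ N : Ideal R) := fun x r => hk r.1 r.2 x
  let _ : Module (R ⧸ m ^ N) M := htor.module
  have : IsScalarTower R (R ⧸ m ^ N) M := htor.isScalarTower
  have : Module.Finite (R ⧸ m ^ N) M := Module.Finite.of_restrictScalars_finite R _ _
  have : IsArtinian (R ⧸ m ^ N) M := inferInstance
  exact isArtinian_of_surjective_algebraMap (R := R ⧸ m ^ N) Ideal.Quotient.mk_surjective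

end FinLenPart

/-- Let `Γ` be a connected non-bipartite graph in which the vertex set
of every odd cycle is dominating. Then for every `t ≥ 1` the module `I^{(t)}/I^t` has
finite length and `H^1_m(R/I^t) ≅ H^1_m(R/I^{(t)})`. -/
theorem stmt9 (k : Type) [Field k] (n : ℕ) (Γ : SimpleGraph (Fin n))
    (hiso : NoIsolated Γ) (hconn : Γ.Connected) (hnb : ¬ Γ.Colorable 2)
    (hdom : ∀ (m : ℕ) (c : ZMod m → Fin n), IsOddCycle Γ m c →
      Dominating Γ (Set.range c))
    (t : ℕ) (ht : 1 ≤ t) :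
    IsFiniteLength (MvPolynomial (Fin n) k)
      ((symbPow k Γ t : Submodule (MvPolynomial (Fin n) k) (MvPolynomial (Fin n) k)) ⧸
        (Submodule.comap (symbPow k Γ t : Submodule (MvPolynomial (Fin n) k)
            (MvPolynomial (Fin n) k)).subtype
          ((edgeIdeal k Γ) ^ t : Submodule (MvPolynomial (Fin n) k)
            (MvPolynomial (Fin n) k)))) ∧
    Nonempty (locCoh k ((edgeIdeal k Γ) ^ t) 1 ≅ locCoh k (symbPow k Γ t) 1) := by
  obtain ⟨N, hN⟩ := exists_pow_mul_mem k Γ hdom t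
  have hle := edge_le_symb k Γ t
  have hmax := maxIdeal_isMaximal k (Fin n)
  constructor
  · refine finLen_of_killed (maxIdeal k (Fin n)) N _ ?_
    intro r hr x
    obtain ⟨⟨y, hy⟩, rfl⟩ := Submodule.Quotient.mk_surjective _ x
    rw [← Submodule.Quotient.mk_smul, Submodule.Quotient.mk_eq_zero, Submodule.mem_comap]
    exact hN r hr y hy
  · let φ : ModuleCat.of (MvPolynomial (Fin n) k) (MvPolynomial (Fin n) k ⧸ edgeIdeal k Γ ^ t) ⟶
        ModuleCat.of (MvPolynomial (Fin n) k) (MvPolynomial (Fin n) k ⧸ symbPow k Γ t) :=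
      ofHom' hle
    have hiso' := locCoh_map_bij (maxIdeal k (Fin n)) φ (by
        intro y
        obtain ⟨a, rfl⟩ := Submodule.Quotient.mk_surjective _ y
        exact ⟨Submodule.Quotient.mk a, rfl⟩) N (by
        intro y hy r hr
        obtain ⟨a, rfl⟩ := Submodule.Quotient.mk_surjective _ y
        have ha : a ∈ symbPow k Γ t := (Submodule.Quotient.mk_eq_zero _).1 hy
        exact (Submodule.Quotient.mk_eq_zero _).2 (hN r hr a ha))
    exact ⟨@CategoryTheory.asIso _ _ _ _ _ hiso'⟩

end
end

section
/- Fix a vertex v of Γ and an integer t ≥ 1. If the maximal graded ideal of R_v is an associated prime of R_v/I_v^t, then the maximal graded ideal of R_v is an associated prime of R_v/I_v^{t+1}. -/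
open MvPolynomial

noncomputable section

theorem aux_coeff {R : Type*} [CommRing R] (I : Ideal R) (x : R) (hx : x ∈ I)
    (ψ : R →+* Polynomial R) (he : ∀ f, (ψ f).eval x = f) (n : ℕ) :
    ∀ f ∈ I ^ n, ∀ j, (ψ f).coeff j ∈ I ^ (n - j) := by
  have h1 : ∀ f ∈ I, ∀ j, (ψ f).coeff j ∈ I ^ (1 - j) := by
    intro f hf j
    rcases j with _ | j
    · have h2 : (ψ f).eval x = x * ((ψ f).divX).eval x + (ψ f).coeff 0 := by
        have h5 := congrArg (Polynomial.eval x) (Polynomial.X_mul_divX_add (ψ f))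
        rw [Polynomial.eval_add, Polynomial.eval_mul, Polynomial.eval_X, Polynomial.eval_C] at h5
        exact h5.symm
      rw [he] at h2
      have h3 : (ψ f).coeff 0 = f - x * ((ψ f).divX).eval x := by
        rw [eq_sub_iff_add_eq, add_comm]; exact h2.symm
      rw [h3]
      simpa using I.sub_mem hf (I.mul_mem_right _ hx)
    · simp
  induction n with
  | zero => intro f _ j; simp
  | succ n ih =>
    intro f hf
    rw [pow_succ] at hf
    refine Submodule.mul_induction_on hf ?_ ?_
    · intro a ha b hb j
      rw [map_mul, Polynomial.coeff_mul]
      refine Ideal.sum_mem _ fun p hp => ?_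
      have hp' := Finset.HasAntidiagonal.mem_antidiagonal.mp hp
      have := Ideal.mul_mem_mul (ih a ha p.1) (h1 b hb p.2)
      rw [← pow_add] at this
      exact Ideal.pow_le_pow_right (by omega) this
    · intro a b ha hb j
      rw [map_add, Polynomial.coeff_add]
      exact Ideal.add_mem _ (ha j) (hb j)

theorem aux_colon {R : Type*} [CommRing R] (I : Ideal R) (x : R) (hx : x ∈ I)
    (ψ : R →+* Polynomial R) (he : ∀ f, (ψ f).eval x = f) (hX : ψ x = Polynomial.X)
    (t : ℕ) (f : R) : x * f ∈ I ^ (t + 1) ↔ f ∈ I ^ t := by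
  constructor
  · intro h
    rw [← he f, Polynomial.eval_eq_sum_range]
    refine Ideal.sum_mem _ fun j _ => ?_
    have h1 := aux_coeff I x hx ψ he (t + 1) _ h (j + 1)
    rw [map_mul, hX, Polynomial.coeff_X_mul] at h1
    have := Ideal.mul_mem_mul h1 (Ideal.pow_mem_pow hx j)
    rw [← pow_add] at this
    exact Ideal.pow_le_pow_right (by omega) this
  · intro h
    rw [pow_succ']
    exact Ideal.mul_mem_mul hx h

theorem aux_assoc {R : Type*} [CommRing R] (I : Ideal R) (x : R) (t : ℕ)
    (hc : ∀ f, x * f ∈ I ^ (t + 1) ↔ f ∈ I ^ t) (p : Ideal R)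
    (h : p ∈ associatedPrimes R (R ⧸ I ^ t)) : p ∈ associatedPrimes R (R ⧸ I ^ (t + 1)) := by
  obtain ⟨hp, y, hy⟩ := h
  obtain ⟨f, rfl⟩ := Ideal.Quotient.mk_surjective y
  refine ⟨hp, Ideal.Quotient.mk _ (x * f), ?_⟩
  rw [hy]
  congr 1
  ext r
  simp only [Submodule.mem_colon_singleton, Submodule.mem_bot, Algebra.smul_def,
    Ideal.Quotient.algebraMap_eq, ← map_mul, Ideal.Quotient.eq_zero_iff_mem]
  rw [← hc, mul_left_comm]

theorem aux_main {k σ : Type} [Field k] (u : σ) (I : Ideal (MvPolynomial σ k))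
    (hu : (X u : MvPolynomial σ k) ∈ I) (t : ℕ) (f : MvPolynomial σ k) :
    X u * f ∈ I ^ (t + 1) ↔ f ∈ I ^ t := by
  classical
  let ψ : MvPolynomial σ k →ₐ[k] Polynomial (MvPolynomial σ k) :=
    aeval (fun i => if i = u then Polynomial.X else Polynomial.C (X i))
  refine aux_colon I (X u) hu ψ.toRingHom ?_ (by simp [ψ]) t f
  intro f
  have : ((Polynomial.aeval (X u : MvPolynomial σ k)).restrictScalars k).comp ψ
      = AlgHom.id k _ := by
    ext i : 1
    by_cases h : i = u <;> simp [ψ, h]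
  simpa [Polynomial.aeval_def, Polynomial.eval₂_eq_eval_map] using congrArg (fun g => g f) this

/-- If the maximal graded ideal of `R_v` is an associated prime of
`R_v / I_v^t`, then it is an associated prime of `R_v / I_v^{t+1}`. -/
theorem stmt10 (k : Type) [Field k] (n : ℕ) (Γ : SimpleGraph (Fin n))
    (hiso : NoIsolated Γ) (v : Fin n) (t : ℕ) (ht : 1 ≤ t)
    (h : maxIdeal k { i : Fin n // i ≠ v } ∈
      associatedPrimes (Rv k v) (Rv k v ⧸ (idealV k (edgeIdeal k Γ) v) ^ t)) :
    maxIdeal k { i : Fin n // i ≠ v } ∈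
      associatedPrimes (Rv k v) (Rv k v ⧸ (idealV k (edgeIdeal k Γ) v) ^ (t + 1)) := by
  obtain ⟨u, hu⟩ := hiso v
  refine aux_assoc _ (X ⟨u, hu.ne'⟩) t (aux_main _ _ ?_ t) _ h
  rw [idealV, Ideal.mem_comap]
  have h1 : (X v * X u : MvPolynomial (Fin n) k) ∈ edgeIdeal k Γ :=
    Ideal.subset_span ⟨v, u, hu, rfl⟩
  have h2 := Ideal.mem_map_of_mem (algebraMap (MvPolynomial (Fin n) k) (LocAway k v)) h1
  rw [map_mul] at h2
  have h3 : IsUnit (algebraMap (MvPolynomial (Fin n) k) (LocAway k v) (X v)) :=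
    IsLocalization.Away.algebraMap_isUnit _
  have h4 := (Ideal.unit_mul_mem_iff_mem _ h3).mp h2
  simpa using h4

end
end

section
/- Let t ≥ 1 and a ∈ ℕ^n, and suppose the degree complex Δ_a(I^t) is disconnected. If there exist vertices u, v of Δ_a(I^t) lying in different connected components of Δ_a(I^t) such that {u,v} is an edge of Γ, then the degree complex Δ_b(I^{t+1}) is disconnected, where b = a + e_u + e_v and e_j denotes the j-th unit vector of ℕ^n. -/
open MvPolynomial

noncomputable section

/-- The substitution `x_v ↦ 0`. -/
def killV (k : Type) [Field k] {σ : Type} [DecidableEq σ] (v : σ) :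
    MvPolynomial σ k →ₐ[k] MvPolynomial σ k :=
  aeval (fun i => if i = v then 0 else X i)

theorem killV_split (k : Type) [Field k] {σ : Type} [DecidableEq σ] (v : σ)
    (h : MvPolynomial σ k) : ∃ q, h = X v * q + killV k v h := by
  induction h using MvPolynomial.induction_on with
  | C c => exact ⟨0, by simp [killV]⟩
  | add p q hp hq =>
    obtain ⟨p', hp⟩ := hp
    obtain ⟨q', hq⟩ := hq
    refine ⟨p' + q', ?_⟩
    rw [map_add]
    linear_combination hp + hq
  | mul_X p i hp =>
    obtain ⟨p', hp⟩ := hp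
    by_cases hi : i = v
    · subst hi
      exact ⟨p, by simp [killV, mul_comm]⟩
    · refine ⟨p' * X i, ?_⟩
      have : killV k v (X i) = X i := by simp [killV, hi]
      rw [map_mul, this]
      linear_combination (X i) * hp

theorem killV_mem (k : Type) [Field k] {σ : Type} [DecidableEq σ] (Γ : SimpleGraph σ) (v : σ)
    {f : MvPolynomial σ k} (hf : f ∈ edgeIdeal k Γ) : killV k v f ∈ edgeIdeal k Γ := by
  have : edgeIdeal k Γ ≤ (edgeIdeal k Γ).comap (killV k v) := by
    conv_lhs => unfold edgeIdeal
    rw [Ideal.span_le]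
    rintro m ⟨i, j, hij, rfl⟩
    change killV k v (X i * X j) ∈ edgeIdeal k Γ
    by_cases hi : i = v
    · simp [killV, hi]
    by_cases hj : j = v
    · simp [killV, hj]
    have : killV k v (X i * X j) = X i * X j := by simp [killV, hi, hj]
    rw [this]
    exact Ideal.subset_span ⟨i, j, hij, rfl⟩
  exact this hf

theorem pow_split (k : Type) [Field k] {σ : Type} [DecidableEq σ] (Γ : SimpleGraph σ) (v : σ)
    (t : ℕ) : ∀ h ∈ edgeIdeal k Γ ^ (t + 1),
      ∃ q ∈ edgeIdeal k Γ ^ t, h = X v * q + killV k v h := by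
  induction t with
  | zero =>
    intro h _
    obtain ⟨q, hq⟩ := killV_split k v h
    exact ⟨q, by simp, hq⟩
  | succ t ih =>
    intro h hh
    rw [pow_succ' _ (t + 1)] at hh
    refine Submodule.mul_induction_on hh ?_ ?_
    · intro f hf g hg
      obtain ⟨q1, h1⟩ := killV_split k v f
      obtain ⟨q2, hq2, h2⟩ := ih g hg
      refine ⟨q1 * g + killV k v f * q2, ?_, ?_⟩
      · refine add_mem (Ideal.mul_mem_left _ _ hg) ?_
        rw [pow_succ']
        exact Ideal.mul_mem_mul (killV_mem k Γ v hf) hq2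
      · rw [map_mul]
        linear_combination g * h1 + killV k v f * h2
    · rintro x y ⟨p, hp, h1⟩ ⟨q, hq, h2⟩
      refine ⟨p + q, add_mem hp hq, ?_⟩
      rw [map_add]
      linear_combination h1 + h2

theorem colon_X (k : Type) [Field k] {σ : Type} [DecidableEq σ] (Γ : SimpleGraph σ) (v : σ)
    (t : ℕ) (f : MvPolynomial σ k) (hf : X v * f ∈ edgeIdeal k Γ ^ (t + 1)) :
    f ∈ edgeIdeal k Γ ^ t := by
  obtain ⟨q, hq, h⟩ := pow_split k Γ v t _ hf
  have h0 : killV k v (X v * f) = 0 := by simp [killV]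
  rw [h0, add_zero] at h
  rwa [mul_left_cancel₀ (X_ne_zero v) h]

theorem not_mem_degComplex (k : Type) [Field k] {σ : Type} [Fintype σ]
    (J : Ideal (MvPolynomial σ k)) (a : σ → ℕ) (F : Finset σ) :
    F ∉ degComplex k J a ↔
      ∃ s ∈ Submonoid.closure ((fun i => (X i : MvPolynomial σ k)) '' (F : Set σ)),
        s * xPow k a ∈ J := by
  unfold degComplex
  rw [Set.mem_ofPred_eq, not_not]
  exact IsLocalization.algebraMap_mem_map_algebraMap_iff
    (Submonoid.closure ((fun i => (X i : MvPolynomial σ k)) '' (F : Set σ))) _ _ _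

theorem xPow_shift (k : Type) [Field k] {σ : Type} [Fintype σ] [DecidableEq σ] (a : σ → ℕ)
    (u v : σ) :
    xPow k (fun i => a i + (if i = u then 1 else 0) + (if i = v then 1 else 0))
      = xPow k a * X u * X v := by
  simp only [xPow, pow_add, Finset.prod_mul_distrib]
  simp [pow_ite]

theorem sub_step (k : Type) [Field k] {σ : Type} [Fintype σ] (Γ : SimpleGraph σ)
    (t : ℕ) (a b : σ → ℕ) (u v : σ) (huv : Γ.Adj u v)
    (hxb : xPow k b = xPow k a * X u * X v) (F : Finset σ)
    (hF : F ∈ degComplex k ((edgeIdeal k Γ) ^ (t + 1)) b) :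
    F ∈ degComplex k ((edgeIdeal k Γ) ^ t) a := by
  by_contra hn
  rw [not_mem_degComplex] at hn
  obtain ⟨s, hs, hm⟩ := hn
  have he : X u * X v ∈ edgeIdeal k Γ := Ideal.subset_span ⟨u, v, huv, rfl⟩
  refine (not_mem_degComplex k _ b F).2 ⟨s, hs, ?_⟩ hF
  have h2 : s * xPow k b = s * xPow k a * (X u * X v) := by rw [hxb]; ring
  rw [h2, pow_succ]
  exact Ideal.mul_mem_mul hm he

theorem vert_step (k : Type) [Field k] {σ : Type} [Fintype σ] [DecidableEq σ]
    (Γ : SimpleGraph σ) (t : ℕ) (a b : σ → ℕ) (u v : σ)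
    (hxb : xPow k b = xPow k a * X u * X v)
    (hu : {u} ∈ degComplex k ((edgeIdeal k Γ) ^ t) a) :
    {u} ∈ degComplex k ((edgeIdeal k Γ) ^ (t + 1)) b := by
  by_contra hn
  rw [not_mem_degComplex] at hn
  obtain ⟨s, hs, hm⟩ := hn
  have hX : (X u : MvPolynomial σ k) ∈ Submonoid.closure
      ((fun i => (X i : MvPolynomial σ k)) '' (({u} : Finset σ) : Set σ)) :=
    Submonoid.subset_closure ⟨u, by simp, rfl⟩
  have he : s * xPow k b = X v * (s * X u * xPow k a) := by
    rw [hxb]; ring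
  rw [he] at hm
  exact (not_mem_degComplex k _ a {u}).2 ⟨s * X u, mul_mem hs hX, colon_X k Γ v t _ hm⟩ hu

/-- Suppose the degree complex `Δ_a(I^t)` is disconnected, and `u, v`
are vertices of `Δ_a(I^t)` lying in different connected components (witnessed by a
separation `A, B` of the vertex set with `u ∈ A`, `v ∈ B` such that no face meets both)
with `{u, v}` an edge of `Γ`. Then `Δ_b(I^{t+1})` is disconnected, where
`b = a + e_u + e_v`. -/
theorem stmt11 (k : Type) [Field k] (n : ℕ) (Γ : SimpleGraph (Fin n))
    (hiso : NoIsolated Γ) (t : ℕ) (ht : 1 ≤ t) (a : Fin n → ℕ)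
    (hdisc : ComplexDisconnected (degComplex k ((edgeIdeal k Γ) ^ t) a))
    (u v : Fin n) (huv : Γ.Adj u v)
    (A B : Set (Fin n)) (hu : u ∈ A) (hv : v ∈ B) (hAB : Disjoint A B)
    (hvert : ∀ i, {i} ∈ degComplex k ((edgeIdeal k Γ) ^ t) a ↔ i ∈ A ∪ B)
    (hsep : ∀ F ∈ degComplex k ((edgeIdeal k Γ) ^ t) a,
      ¬ ((∃ i ∈ F, i ∈ A) ∧ (∃ j ∈ F, j ∈ B))) :
    ComplexDisconnected (degComplex k ((edgeIdeal k Γ) ^ (t + 1))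
      (fun i => a i + (if i = u then 1 else 0) + (if i = v then 1 else 0))) := by
  have hxb := xPow_shift k a u v
  generalize (fun i => a i + (if i = u then 1 else 0) + (if i = v then 1 else 0)) = b at hxb ⊢
  have hsub := sub_step k Γ t a b u v huv hxb
  have hub := vert_step k Γ t a b u v hxb ((hvert u).2 (Or.inl hu))
  have hvb := vert_step k Γ t a b v u (by rw [hxb]; ring) ((hvert v).2 (Or.inr hv))
  generalize degComplex k ((edgeIdeal k Γ) ^ (t + 1)) b = D at *
  generalize degComplex k ((edgeIdeal k Γ) ^ t) a = E at *
  refine ⟨{i | i ∈ A ∧ {i} ∈ D},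
    {i | i ∈ B ∧ {i} ∈ D},
    ⟨u, hu, hub⟩, ⟨v, hv, hvb⟩, ?_, ?_, ?_⟩
  · exact hAB.mono (fun _ h => h.1) (fun _ h => h.1)
  · intro i
    constructor
    · intro h
      rcases (hvert i).1 (hsub _ h) with h' | h'
      · exact Or.inl ⟨h', h⟩
      · exact Or.inr ⟨h', h⟩
    · rintro (h | h) <;> exact h.2
  · rintro F hF ⟨⟨i, hi, hiA⟩, ⟨j, hj, hjB⟩⟩
    exact hsep F (hsub F hF) ⟨⟨i, hi, hiA.1⟩, ⟨j, hj, hjB.1⟩⟩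


end
end

section
/- Let Γ be a connected non-bipartite graph such that the vertex set of every odd cycle of Γ is a dominating set. If H^1_m(R/I^t) ≠ 0 for some t ≥ 1, then H^1_m(R/I^{t+1}) ≠ 0. -/
open MvPolynomial

noncomputable section

namespace LC
section
open CategoryTheory Limits Opposite
variable {R : Type} [CommRing R]

abbrev FF (M : ModuleCat.{0} R) : ModuleCat.{0} R ⥤ (ModuleCat.{0} R)ᵒᵖ :=
  ((linearYoneda R (ModuleCat.{0} R)).obj M).rightOp

abbrev KK {X : ModuleCat.{0} R} (P : ProjectiveResolution X) (M : ModuleCat.{0} R) :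
    ChainComplex (ModuleCat.{0} R)ᵒᵖ ℕ :=
  ((FF M).mapHomologicalComplex _).obj P.complex

def isoH {X : ModuleCat.{0} R} (P : ProjectiveResolution X) (M : ModuleCat.{0} R) :
    ((FF M).leftDerived 1).obj X ≅ (KK P M).homology 1 := P.isoLeftDerivedObj (FF M) 1

abbrev KKm {X X' : ModuleCat.{0} R} {P : ProjectiveResolution X} {P' : ProjectiveResolution X'}
    (M : ModuleCat.{0} R) (g : P'.complex ⟶ P.complex) : KK P' M ⟶ KK P M :=
  ((FF M).mapHomologicalComplex _).map g

lemma isoH_nat {X X' : ModuleCat.{0} R} (f : X' ⟶ X) (P : ProjectiveResolution X)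
   (P' : ProjectiveResolution X')  (M : ModuleCat.{0} R)
   (g : P'.complex ⟶ P.complex) (hg : g.f 0 ≫ P.π.f 0 = P'.π.f 0 ≫ f) :
   ((FF M).leftDerived 1).map f ≫ (isoH P M).hom =
    (isoH P' M).hom ≫ HomologicalComplex.homologyMap (KKm M g) 1 :=
  ProjectiveResolution.isoLeftDerivedObj_hom_naturality f P' P g hg (FF M) 1

/-- map from cocycles -/
def clMap {X : ModuleCat.{0} R} (P : ProjectiveResolution X) (M : ModuleCat.{0} R) :
    ((KK P M).opcycles 1).unop ⟶ ((Ext R (ModuleCat.{0} R) 1).obj (op X)).obj M :=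
  ((isoH P M).hom ≫ (KK P M).homologyι 1).unop

def toHom {X : ModuleCat.{0} R} (P : ProjectiveResolution X) (M : ModuleCat.{0} R) :
    ((KK P M).opcycles 1).unop ⟶ ModuleCat.of R (P.complex.X 1 ⟶ M) :=
  ((KK P M).pOpcycles 1).unop

lemma toHom_inj {X : ModuleCat.{0} R} (P : ProjectiveResolution X) (M : ModuleCat.{0} R) :
    Function.Injective (toHom P M) := by
  have : Mono (toHom P M) := unop_mono_of_epi ((KK P M).pOpcycles 1)
  exact (ModuleCat.mono_iff_injective _).1 this

lemma toHom_range {X : ModuleCat.{0} R} (P : ProjectiveResolution X) (M : ModuleCat.{0} R)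
    (z : P.complex.X 1 ⟶ M) (hz : P.complex.d 2 1 ≫ z = 0) : ∃ w, toHom P M w = z := by
  have h := ShortComplex.exact_of_g_is_cokernel 
    (ShortComplex.mk _ _ ((KK P M).d_pOpcycles 2 1)) ((KK P M).opcyclesIsCokernel 2 1 (by simp))
  have h2 := h.unop
  rw [ShortComplex.moduleCat_exact_iff] at h2
  exact h2 z hz

lemma cl_surj {X : ModuleCat.{0} R} (P : ProjectiveResolution X) (M : ModuleCat.{0} R) :
    Function.Surjective (clMap P M) := by
  have : Epi (clMap P M) := unop_epi_of_mono ((isoH P M).hom ≫ (KK P M).homologyι 1)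
  exact (ModuleCat.epi_iff_surjective _).1 this

lemma toHom_coc {X : ModuleCat.{0} R} (P : ProjectiveResolution X) (M : ModuleCat.{0} R)
    (w) : P.complex.d 2 1 ≫ (show P.complex.X 1 ⟶ M from toHom P M w) = 0 := by
  have h := congrArg Quiver.Hom.unop ((KK P M).d_pOpcycles 2 1)
  exact congrArg (fun f => f.hom w) h

lemma cl_zero_iff {X : ModuleCat.{0} R} (P : ProjectiveResolution X) (M : ModuleCat.{0} R)
    (w) : clMap P M w = 0 ↔ ∃ y : P.complex.X 0 ⟶ M, toHom P M w = P.complex.d 1 0 ≫ y := by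
  have h := ShortComplex.exact_of_f_is_kernel
    (ShortComplex.mk _ _ ((KK P M).homologyι_comp_fromOpcycles 1 0))
    ((KK P M).homologyIsKernel 1 0 (by simp))
  have h2 := h.unop
  rw [ShortComplex.moduleCat_exact_iff] at h2
  have ei : Function.Injective (isoH P M).hom.unop := by
    have : Mono (isoH P M).hom.unop := unop_mono_of_epi _
    exact (ModuleCat.mono_iff_injective _).1 this
  have key : clMap P M w = 0 ↔ ((KK P M).homologyι 1).unop w = 0 := by
    have e2 : clMap P M w = (isoH P M).hom.unop (((KK P M).homologyι 1).unop w) := rfl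
    rw [e2]
    exact map_eq_zero_iff (isoH P M).hom.unop.hom ei
  have hp := congrArg Quiver.Hom.unop ((KK P M).p_fromOpcycles 1 0)
  have hp' : ∀ y : P.complex.X 0 ⟶ M,
     toHom P M (((KK P M).fromOpcycles 1 0).unop y) = P.complex.d 1 0 ≫ y :=
    fun y => congrArg (fun f => f.hom y) hp
  rw [key]
  constructor
  · intro hw
    obtain ⟨y, hy⟩ := h2 w hw
    exact ⟨y, (congrArg (toHom P M) hy.symm).trans (hp' y)⟩
  · rintro ⟨y, hy⟩
    rw [toHom_inj P M (hy.trans (hp' y).symm)]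
    have := congrArg Quiver.Hom.unop ((KK P M).homologyι_comp_fromOpcycles 1 0)
    exact congrArg (fun f => f.hom y) this

lemma cl_nat {X X' : ModuleCat.{0} R} (f : X' ⟶ X) (P : ProjectiveResolution X)
   (P' : ProjectiveResolution X')  (M : ModuleCat.{0} R)
   (g : P'.complex ⟶ P.complex) (hg : g.f 0 ≫ P.π.f 0 = P'.π.f 0 ≫ f)
   (w w') (hw : toHom P' M w' = g.f 1 ≫ (show P.complex.X 1 ⟶ M from toHom P M w)) : 
   ((Ext R (ModuleCat.{0} R) 1).map f.op).app M (clMap P M w) = clMap P' M w' := by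
  have h1 := isoH_nat f P P' M g hg
  have hi := HomologicalComplex.homologyι_naturality (KKm M g) 1
  have hp := HomologicalComplex.p_opcyclesMap (KKm M g) 1
  have hp' : toHom P M ≫ ((FF M).map (g.f 1)).unop =
    (HomologicalComplex.opcyclesMap (KKm M g) 1).unop ≫ toHom P' M :=
    (congrArg Quiver.Hom.unop hp).symm
  have hw2 : w' = (HomologicalComplex.opcyclesMap (KKm M g) 1).unop w := by
    apply toHom_inj
    rw [hw]
    exact congrArg (fun f => f.hom w) hp'
  rw [hw2]
  have h3 : ((FF M).leftDerived 1).map f ≫ ((isoH P M).hom ≫ (KK P M).homologyι 1)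
     = ((isoH P' M).hom ≫ (KK P' M).homologyι 1) ≫ 
      (HomologicalComplex.opcyclesMap (KKm M g) 1) := by
    rw [← Category.assoc, h1, Category.assoc, Category.assoc]
    rw [HomologicalComplex.homologyι_naturality]
  exact congrArg (fun f => f.unop.hom w) h3

section alg
variable {A B M : Type} [AddCommGroup A] [Module R A] [AddCommGroup B] [Module R B]
  [AddCommGroup M] [Module R M] {J : Ideal R} (d : A →ₗ[R] B) (π : B →ₗ[R] R ⧸ J) (ε : B →ₗ[R] R)

lemma alg_a (hε : ∀ b, Ideal.Quotient.mk J (ε b) = π b) (hπ : Function.Surjective π)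
    (hex : ∀ b, π b = 0 ↔ ∃ a, d a = b) (z : A →ₗ[R] M) (hz : ∀ a, d a = 0 → z a = 0) :
    ∃ (φ : J →ₗ[R] M) (h : B →ₗ[R] M), ∀ r (hr : ε (d r) ∈ J), z r = φ ⟨ε (d r), hr⟩ + h (d r) := by
  obtain ⟨p, hp⟩ := hπ 1
  -- the induced map on ker π
  have hu : ∀ b : LinearMap.ker π, ∃ a, d a = b := fun b => (hex b).1 b.2
  choose s hs using hu
  have hzs : ∀ a b, d a = d b → z a = z b := fun a b hab => by
    have := hz (a - b) (by simp [hab])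
    rwa [map_sub, sub_eq_zero] at this
  let Z : LinearMap.ker π →ₗ[R] M :=
    { toFun := fun b => z (s b)
      map_add' := fun a b => by
        rw [← map_add]; apply hzs; simp [hs]
      map_smul' := fun c a => by
        simp only [RingHom.id_apply]
        rw [← map_smul]; apply hzs; simp [hs] }
  have hmk : ∀ r : R, π (r • p) = Ideal.Quotient.mk J r := fun r => by
    rw [map_smul, hp]
    exact (mul_one (Ideal.Quotient.mk J r))
  let iJ : J →ₗ[R] LinearMap.ker π := LinearMap.codRestrict _
    ((LinearMap.toSpanSingleton R B p).comp (Submodule.subtype J)) (fun j => by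
      simp only [LinearMap.mem_ker, LinearMap.comp_apply, LinearMap.toSpanSingleton_apply]
      rw [hmk]; exact Ideal.Quotient.eq_zero_iff_mem.2 j.2)
  let iB : B →ₗ[R] LinearMap.ker π := LinearMap.codRestrict _
    (LinearMap.id - (LinearMap.toSpanSingleton R B p).comp ε) (fun q => by
      simp only [LinearMap.mem_ker, LinearMap.comp_apply, LinearMap.toSpanSingleton_apply, LinearMap.sub_apply, map_sub, LinearMap.id_apply]
      rw [hmk, hε, sub_self])
  refine ⟨Z.comp iJ, Z.comp iB, fun r hr => ?_⟩
  rw [LinearMap.comp_apply, LinearMap.comp_apply, ← map_add]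
  change z r = z (s _)
  apply hzs
  rw [hs]
  simp [iJ, iB]

lemma alg_b (hε : ∀ b, Ideal.Quotient.mk J (ε b) = π b) (hπ : Function.Surjective π)
    (hex : ∀ b, π b = 0 ↔ ∃ a, d a = b) (φ : J →ₗ[R] M) (y : B →ₗ[R] M)
    (hy : ∀ r (hr : ε (d r) ∈ J), φ ⟨ε (d r), hr⟩ = y (d r)) :
    ∃ x : M, ∀ j : J, φ j = (j : R) • x := by
  obtain ⟨p, hp⟩ := hπ 1
  have h0 : ε p - 1 ∈ J := by
    rw [← Ideal.Quotient.eq_zero_iff_mem, map_sub, hε, hp]; simp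
  refine ⟨y p - φ ⟨_, h0⟩, fun j => ?_⟩
  obtain ⟨r, hr⟩ := (hex ((j : R) • p)).1 (by
    rw [map_smul, hp]; exact (mul_one (Ideal.Quotient.mk J (j : R))).trans (Ideal.Quotient.eq_zero_iff_mem.2 j.2))
  have h1 : ε (d r) ∈ J := by rw [hr, map_smul]; exact Ideal.mul_mem_right _ _ j.2
  have h2 := hy r h1
  rw [smul_sub, ← map_smul y, ← hr, ← h2, ← map_smul φ, ← map_sub]
  congr 1
  ext
  simp [hr, mul_sub]
end alg

section res
variable {J : Ideal R} (P : ProjectiveResolution (ModuleCat.of R (R ⧸ J)))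

def pi0 : P.complex.X 0 →ₗ[R] R ⧸ J := (show P.complex.X 0 ⟶ ModuleCat.of R (R ⧸ J) from P.π.f 0).hom

lemma pi0_surj : Function.Surjective (pi0 P) := 
  (ModuleCat.epi_iff_surjective (P.π.f 0)).1 inferInstance

lemma pi0_ex (b) : pi0 P b = 0 ↔ ∃ a, (P.complex.d 1 0).hom a = b := by
  constructor
  · have := P.exact₀
    rw [ShortComplex.moduleCat_exact_iff] at this
    exact this b
  · rintro ⟨a, rfl⟩
    exact congrArg (fun f => f.hom a) P.complex_d_comp_π_f_zero

lemma d_ex (a) (h : (P.complex.d 1 0).hom a = 0) : ∃ c, (P.complex.d 2 1).hom c = a := by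
    have := P.exact_succ 0
    rw [ShortComplex.moduleCat_exact_iff] at this
    exact this a h

lemma exists_eps : ∃ ε : P.complex.X 0 →ₗ[R] R, ∀ b, Ideal.Quotient.mk J (ε b) = pi0 P b := by
  have : Module.Projective R (P.complex.X 0) := 
    (IsProjective.iff_projective _).2 (P.projective 0)
  obtain ⟨ε, h⟩ := Module.projective_lifting_property (Submodule.mkQ J) (pi0 P) (Submodule.mkQ_surjective J)
  exact ⟨ε, fun b => congrArg (fun f => f b) h⟩

end res

open localCohomology in
theorem crit (𝔪 : Ideal R) (M : ModuleCat.{0} R) :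
    Subsingleton ((localCohomology 𝔪 1).obj M) ↔
    ∀ k (φ : ↥(𝔪^k) →ₗ[R] M), ∃ l, ∃ h : k ≤ l, ∃ x : M, ∀ j (hj : j ∈ 𝔪^l), 
      φ ⟨j, Ideal.pow_le_pow_right h hj⟩ = j • x := by
  let D := diagram (idealPowersDiagram 𝔪) 1
  let D' := D ⋙ (evaluation _ _).obj M
  have hc : IsColimit (((evaluation (ModuleCat.{0} R) (ModuleCat.{0} R)).obj M).mapCocone (colimit.cocone D)) :=
    isColimitOfPreserves _ (colimit.isColimit D)
  have hQ : ∀ k, ∃ P : ProjectiveResolution (ModuleCat.of R (R ⧸ 𝔪^k)), True := fun k => ⟨projectiveResolution _, trivial⟩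
  choose P _ using hQ
  choose ε hε using fun k => exists_eps (P k)
  have hεd : ∀ k r, ε k (((P k).complex.d 1 0).hom r) ∈ 𝔪^k := fun k r => by
    rw [← Ideal.Quotient.eq_zero_iff_mem, hε, pi0_ex]; exact ⟨r, rfl⟩
  -- transition maps
  let tr : ∀ k l, k ≤ l → (ModuleCat.of R (R ⧸ 𝔪^l) ⟶ ModuleCat.of R (R ⧸ 𝔪^k)) := fun k l h => 
    (ringModIdeals (idealPowersDiagram 𝔪)).map (homOfLE h).op
  have hnat : ∀ k l (h : k ≤ l) (φ : ↥(𝔪^k) →ₗ[R] M) , 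
     ∃ g : (P l).complex ⟶ (P k).complex, g.f 0 ≫ (P k).π.f 0 = (P l).π.f 0 ≫ tr k l h ∧
       ∃ H : (P l).complex.X 0 →ₗ[R] M, ∀ r, 
      φ ⟨_, hεd k ((g.f 1).hom r)⟩ = φ ⟨_, Ideal.pow_le_pow_right h (hεd l r)⟩ + H (((P l).complex.d 1 0).hom r) := by
    intro k l h φ
    have hg := ProjectiveResolution.lift_commutes_zero (tr k l h) (P l) (P k)
    refine ⟨ProjectiveResolution.lift (tr k l h) (P l) (P k), hg, ?_⟩
    generalize ProjectiveResolution.lift (tr k l h) (P l) (P k) = g at hg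
    refine ⟨φ.comp (LinearMap.codRestrict _ ((ε k).comp (g.f 0).hom - ε l) ?_), ?_⟩
    · intro q
      rw [← Ideal.Quotient.eq_zero_iff_mem, LinearMap.sub_apply, map_sub, sub_eq_zero, LinearMap.comp_apply, hε]
      have h1 : pi0 (P k) ((g.f 0).hom q) = (tr k l h).hom (pi0 (P l) q) := congrArg (fun f => f.hom q) hg
      rw [h1, ← hε l]
      rfl
    · intro r
      have h3 : ((P k).complex.d 1 0).hom ((g.f 1).hom r) = (g.f 0).hom (((P l).complex.d 1 0).hom r) :=
          congrArg (fun f => f.hom r) (g.comm 1 0)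
      rw [LinearMap.comp_apply, ← map_add]
      congr 1
      ext
      simp [h3]
  have step : ∀ k l (h : k ≤ l) (w : ((KK (P k) M).opcycles 1).unop) (g : (P l).complex ⟶ (P k).complex)
     (hg : g.f 0 ≫ (P k).π.f 0 = (P l).π.f 0 ≫ tr k l h), 
     D'.map (homOfLE h).op.op (clMap (P k) M w) = 0 ↔ ∃ y : (P l).complex.X 0 ⟶ M, 
      g.f 1 ≫ (show (P k).complex.X 1 ⟶ M from toHom (P k) M w) = (P l).complex.d 1 0 ≫ y := by
    intro k l h w g hg
    obtain ⟨w', hw'⟩ := toHom_range (P l) M (g.f 1 ≫ (show (P k).complex.X 1 ⟶ M from toHom (P k) M w)) (by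
      rw [← Category.assoc, ← g.comm, Category.assoc, toHom_coc, comp_zero])
    have h1 := cl_nat (tr k l h) (P k) (P l) M g hg w w' hw'
    have h2 : D'.map (homOfLE h).op.op (clMap (P k) M w) = clMap (P l) M w' := h1
    have h3 := cl_zero_iff (P l) M w'
    rw [hw'] at h3
    rw [h2]
    exact h3
  constructor
  · intro hs k φ
    let z : (P k).complex.X 1 →ₗ[R] M := φ.comp (LinearMap.codRestrict _ ((ε k).comp ((P k).complex.d 1 0).hom) (hεd k))
    obtain ⟨w, hw⟩ := toHom_range (P k) M (ModuleCat.ofHom z) (by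
      ext r
      have h0 : ((P k).complex.d 1 0).hom (((P k).complex.d 2 1).hom r) = 0 :=
        congrArg (fun f => f.hom r) ((P k).complex.d_comp_d 2 1 0)
      change φ ⟨ε k (((P k).complex.d 1 0).hom (((P k).complex.d 2 1).hom r)), _⟩ = 0
      simp only [h0, map_zero]
      exact map_zero φ)
    have h0 : (((evaluation (ModuleCat.{0} R) (ModuleCat.{0} R)).obj M).mapCocone (colimit.cocone D)).ι.app (op (op k)) (clMap (P k) M w)
       = (((evaluation (ModuleCat.{0} R) (ModuleCat.{0} R)).obj M).mapCocone (colimit.cocone D)).ι.app (op (op k)) 0 := hs.elim _ _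
    obtain ⟨⟨⟨l⟩⟩, f, g', hf⟩ := Concrete.isColimit_exists_of_rep_eq D' hc _ _ h0
    have hkl : k ≤ l := f.unop.unop.down.down
    obtain ⟨g, hg, H, hH⟩ := hnat k l hkl φ
    have hf' : D'.map (homOfLE hkl).op.op (clMap (P k) M w) = 0 := hf.trans (map_zero _)
    obtain ⟨y, hy⟩ := (step k l hkl w g hg).1 hf'
    obtain ⟨x, hx⟩ := alg_b ((P l).complex.d 1 0).hom (pi0 (P l)) (ε l) (hε l) (pi0_surj _) (pi0_ex _)
      (φ.comp (Submodule.inclusion (Ideal.pow_le_pow_right hkl))) (y.hom - H) (by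
        intro r hr
        have h1 := hH r
        rw [hw] at hy
        have h2 : φ ⟨_, hεd k ((g.f 1).hom r)⟩ = y.hom (((P l).complex.d 1 0).hom r) :=
          congrArg (fun f => f.hom r) hy
        rw [h2] at h1
        rw [LinearMap.sub_apply, h1, add_sub_cancel_right]
        rfl)
    exact ⟨l, hkl, x, fun j hj => hx ⟨j, hj⟩⟩
  · intro hφ
    have key : ∀ e : (localCohomology 𝔪 1).obj M, e = 0 := by
      intro e
      obtain ⟨⟨⟨k⟩⟩, e', he⟩ := Concrete.isColimit_exists_rep D' hc e
      obtain ⟨w, rfl⟩ := cl_surj (P k) M e'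
      have hco := toHom_coc (P k) M w
      obtain ⟨φ, h, hh⟩ := alg_a ((P k).complex.d 1 0).hom (pi0 (P k)) (ε k) (hε k) (pi0_surj _) (pi0_ex _)
        (show (P k).complex.X 1 ⟶ M from toHom (P k) M w).hom (by
          intro a ha
          obtain ⟨c, rfl⟩ := d_ex _ a ha
          exact congrArg (fun f => f.hom c) hco)
      obtain ⟨l, hkl, x, hx⟩ := hφ k φ
      obtain ⟨g, hg, H, hH⟩ := hnat k l hkl φ
      have h1 : D'.map (homOfLE hkl).op.op (clMap (P k) M w) = 0 := by
        rw [step k l hkl w g hg]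
        refine ⟨ModuleCat.ofHom ((LinearMap.toSpanSingleton R M x).comp (ε l) + H + h.comp (g.f 0).hom), ?_⟩
        ext r
        have h2 := hh ((g.f 1).hom r) (hεd k _)
        have h3 : ((P k).complex.d 1 0).hom ((g.f 1).hom r) = (g.f 0).hom (((P l).complex.d 1 0).hom r) :=
          congrArg (fun f => f.hom r) (g.comm 1 0)
        refine h2.trans ?_
        rw [hH r, hx _ (hεd l r), h3]
        rfl
      have h4 := congrArg (fun f => f.hom (clMap (P k) M w)) ((((evaluation (ModuleCat.{0} R) (ModuleCat.{0} R)).obj M).mapCocone (colimit.cocone D)).w (homOfLE hkl).op.op)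
      rw [← he]
      refine h4.symm.trans ?_
      refine (congrArg _ h1).trans
        (map_zero ((((evaluation (ModuleCat.{0} R) (ModuleCat.{0} R)).obj M).mapCocone
          (colimit.cocone D)).ι.app (op (op l))).hom)
    exact ⟨fun a b => (key a).trans (key b).symm⟩
end
end LC

namespace LC
open Finsupp
variable {σ : Type} (Γ : SimpleGraph σ)

/-- unit vector -/
noncomputable abbrev ee (i : σ) : σ →₀ ℕ := Finsupp.single i 1

def PM : ℕ → (σ →₀ ℕ) → Prop
  | 0, _ => True
  | s+1, c => ∃ i j c', Γ.Adj i j ∧ c = c' + ee i + ee j ∧ PM s c'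

variable {Γ}

lemma PM.mono {s : ℕ} {c : σ →₀ ℕ} (h : PM Γ s c) (d : σ →₀ ℕ) : PM Γ s (c + d) := by
  induction s generalizing c with
  | zero => trivial
  | succ s ih =>
    obtain ⟨i, j, c', h1, rfl, h3⟩ := h
    exact ⟨i, j, c' + d, h1, by abel, ih h3⟩

lemma PM.mono_le {s : ℕ} {c d : σ →₀ ℕ} (h : PM Γ s c) (hd : c ≤ d) : PM Γ s d := by
  obtain ⟨e, rfl⟩ := exists_add_of_le hd
  exact h.mono e

lemma PM.pred {s : ℕ} {c : σ →₀ ℕ} (h : PM Γ (s+1) c) : PM Γ s c := by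
  obtain ⟨i, j, c', h1, rfl, h3⟩ := h
  exact (h3.mono _).mono _

lemma PM.anti {s t : ℕ} {c : σ →₀ ℕ} (h : PM Γ t c) (hst : s ≤ t) : PM Γ s c := by
  induction hst with
  | refl => exact h
  | step _ ih => exact ih h.pred

lemma PM.add {s : ℕ} {c : σ →₀ ℕ} (h : PM Γ s c) {i j : σ} (hij : Γ.Adj i j) :
    PM Γ (s+1) (c + ee i + ee j) := ⟨i, j, c, hij, rfl, h⟩

lemma split {c : σ →₀ ℕ} {v : σ} (h : c v ≠ 0) : ∃ c', c = c' + ee v := by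
  classical
  refine ⟨c - ee v, (tsub_add_cancel_of_le ?_).symm⟩
  rw [Finsupp.single_le_iff]; omega

lemma PM.drop {s : ℕ} {c : σ →₀ ℕ} {v : σ} (h : PM Γ s (c + ee v)) :
    PM Γ s c ∨ ∃ s' u c', s = s' + 1 ∧ Γ.Adj v u ∧ c = c' + ee u ∧ PM Γ s' c' := by
  classical
  induction s generalizing c with
  | zero => left; trivial
  | succ s ih =>
    obtain ⟨i, j, c', h1, h2, h3⟩ := h
    by_cases hi : i = v
    · subst hi
      right
      refine ⟨s, j, c', rfl, h1, ?_, h3⟩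
      rw [add_right_comm] at h2
      exact add_right_cancel h2
    by_cases hj : j = v
    · subst hj
      right
      exact ⟨s, i, c', rfl, h1.symm, add_right_cancel h2, h3⟩
    have h4 : c' v ≠ 0 := by
      have := DFunLike.congr_fun h2 v
      simp [Finsupp.single_apply, hi, hj] at this
      omega
    obtain ⟨c'', rfl⟩ := split h4
    have h5 : c = c'' + ee i + ee j := by
      apply add_right_cancel (b := ee v)
      rw [h2]; abel
    rcases ih h3 with h6 | ⟨s', u, d, rfl, hu, rfl, h6⟩
    · left; rw [h5]; exact h6.add h1
    · right
      refine ⟨s' + 1, u, d + ee i + ee j, rfl, hu, ?_, h6.add h1⟩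
      rw [h5]; abel

lemma PM.drop' {s : ℕ} {c : σ →₀ ℕ} {v : σ} (h : PM Γ (s+1) (c + ee v)) : PM Γ s c := by
  rcases h.drop with h | ⟨s', u, c', h1, -, rfl, h⟩
  · exact h.pred
  · obtain rfl : s = s' := by omega
    exact h.mono _

lemma PM.D {s : ℕ} {c : σ →₀ ℕ} {i : σ} (h : PM Γ s (c + ee i)) (hc : s ≤ c i) : PM Γ s c := by
  classical
  induction s generalizing c with
  | zero => trivial
  | succ s ih =>
    rcases h.drop with h | ⟨s', u, c', h1, hu, rfl, h⟩
    · exact h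
    · obtain rfl : s = s' := by omega
      have hui : u ≠ i := hu.ne'
      have hc' : s + 1 ≤ c' i := by simpa [Finsupp.single_apply, hui] using hc
      obtain ⟨c'', rfl⟩ := split (c := c') (v := i) (by omega)
      have : PM Γ s c'' := ih h (by simp at hc'; omega)
      exact this.add hu

lemma PM.D' {s : ℕ} {c : σ →₀ ℕ} {i : σ} {N : ℕ} (h : PM Γ s (c + single i N)) (hc : s ≤ c i) :
    PM Γ s c := by
  induction N with
  | zero => simpa using h
  | succ N ih =>
    apply ih
    apply PM.D (i := i)
    · rw [add_assoc, ← Finsupp.single_add]; exact h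
    · simp; omega

lemma PM.U {i : σ} {χ : σ → Bool}
    (hχ : ∀ p q, p ≠ i → ¬ Γ.Adj i p → q ≠ i → ¬ Γ.Adj i q → Γ.Adj p q → χ p ≠ χ q)
    {s : ℕ} {m : σ →₀ ℕ} {p q : σ} (hp : p ≠ i) (hp' : ¬ Γ.Adj i p) (hq : q ≠ i)
    (hq' : ¬ Γ.Adj i q) (hpq : χ p = χ q) (hm : s + 1 ≤ m i) (h1 : PM Γ s m)
    (h2 : PM Γ (s+1) (m + ee q + ee p)) : PM Γ (s+1) (m + ee p) ∨ PM Γ (s+1) (m + ee q) := by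
  classical
  induction s using Nat.strong_induction_on generalizing m p q with
  | _ s ih =>
  rcases h2.drop with h | ⟨s', v1, c', hs, hv1, hc, h⟩
  · exact Or.inr h
  obtain rfl : s = s' := by omega
  have hv1i : v1 ≠ i := by rintro rfl; exact hp' hv1.symm
  have hv1q : v1 ≠ q := by
    rintro rfl
    exact hχ _ _ hp hp' hq hq' hv1 hpq
  have hmv1 : m v1 ≠ 0 := by
    have := DFunLike.congr_fun hc v1
    simp [Finsupp.single_apply, hv1q.symm] at this
    omega
  obtain ⟨m', rfl⟩ := split hmv1
  have hm' : s + 1 ≤ m' i := by simpa [Finsupp.single_apply, hv1i] using hm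
  obtain rfl : c' = m' + ee q := by
    apply add_right_cancel (b := ee v1)
    rw [← hc]; abel
  by_cases hv1N : Γ.Adj i v1
  · right
    obtain ⟨m'', rfl⟩ := split (c := m') (v := i) (by omega)
    have h3 : PM Γ s (m'' + ee q) := by
      apply PM.D (i := i)
      · convert h using 1; abel
      · simp at hm' ⊢; omega
    convert h3.add hv1N using 1; abel
  rcases h1.drop with h4 | ⟨s', v2, m1, rfl, hv2, rfl, h4⟩
  · left
    convert h4.add hv1.symm using 1
  have hv2i : v2 ≠ i := by rintro rfl; exact hv1N hv2.symm
  have hm1 : s' + 1 + 1 ≤ m1 i := by simpa [Finsupp.single_apply, hv2i] using hm'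
  by_cases hv2N : Γ.Adj i v2
  · left
    obtain ⟨m1', rfl⟩ := split (c := m1) (v := i) (by omega)
    have h5 : PM Γ s' m1' := h4.D (by simp at hm1; omega)
    convert (h5.add hv2N).add hv1.symm using 1
  · have e1 := hχ _ _ hp hp' hv1i hv1N hv1
    have e2 := hχ _ _ hv1i hv1N hv2i hv2N hv2
    have e3 : χ v2 = χ q := by
      rw [← hpq]; revert e1 e2; cases χ p <;> cases χ v1 <;> cases χ v2 <;> simp
    rcases ih s' (by omega) hv2i hv2N hq hq' e3 (by omega) h4 (by convert h using 1; abel) with h6 | h6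
    · left
      convert h6.add hv1.symm using 1
    · right
      convert h6.add hv2 using 1; abel

lemma PM.U2 {i : σ} {χ : σ → Bool}
    (hχ : ∀ p q, p ≠ i → ¬ Γ.Adj i p → q ≠ i → ¬ Γ.Adj i q → Γ.Adj p q → χ p ≠ χ q)
    {s : ℕ} {m : σ →₀ ℕ} {p : σ} (hp : p ≠ i) (hp' : ¬ Γ.Adj i p) (hm : s + 1 ≤ m i) (h1 : PM Γ s m)
    (h2 : ¬ PM Γ (s+1) (m + ee p)) (K : ℕ) : ¬ PM Γ (s+1) (m + single p (K+1)) := by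
  induction K with
  | zero => exact h2
  | succ K ih =>
    intro h
    have := PM.U hχ (s := s) (m := m + single p K) hp hp' hp hp' rfl (by simp; omega) (h1.mono _) (by
      convert h using 1
      rw [add_assoc, add_assoc, ← Finsupp.single_add, ← Finsupp.single_add, add_assoc K])
    rw [or_self, add_assoc, ← Finsupp.single_add] at this
    exact ih this

lemma PM.E {i : σ} {χ : σ → Bool}
    (hχ : ∀ p q, p ≠ i → ¬ Γ.Adj i p → q ≠ i → ¬ Γ.Adj i q → Γ.Adj p q → χ p ≠ χ q)
    {t : ℕ} {c : σ →₀ ℕ} (hc : t ≤ c i) (h : ¬ PM Γ t c) (w : σ) :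
    ∃ f, (f = w ∨ Γ.Adj w f) ∧ ∀ K, ¬ PM Γ t (c + single f K) := by
  classical
  by_cases hw : w = i ∨ Γ.Adj w i
  · refine ⟨i, hw.imp Eq.symm id, fun K hK => h (hK.D' hc)⟩
  push Not at hw
  obtain ⟨hwi, hwN⟩ := hw
  replace hwN : ¬ Γ.Adj i w := fun h => hwN h.symm
  have hex : ∃ s, ¬ PM Γ s c := ⟨t, h⟩
  have hf := Nat.find_spec hex
  have hft : Nat.find hex ≤ t := Nat.find_min' hex h
  have hfm := fun m => Nat.find_min (m := m) hex
  generalize Nat.find hex = s1 at *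
  cases s1 with
  | zero => exact absurd trivial hf
  | succ s =>
  have hs : PM Γ s c := not_not.1 (hfm s (by omega))
  have fin : ∀ f, (∀ K, ¬ PM Γ (s+1) (c + single f (K+1))) → ∀ K, ¬ PM Γ t (c + single f K) := by
    intro f hf' K hK
    cases K with
    | zero => apply h; simpa using hK
    | succ K => exact hf' K (hK.anti hft)
  by_cases h1 : PM Γ (s+1) (c + ee w)
  · rcases h1.drop with h2 | ⟨s', u, c', hs', hu, rfl, h2⟩
    · exact absurd h2 hf
    obtain rfl : s = s' := by omega
    have hui : u ≠ i := by rintro rfl; exact hwN hu.symm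
    have hc' : t ≤ c' i := by simpa [Finsupp.single_apply, hui] using hc
    have huN : ¬ Γ.Adj i u := by
      intro huN
      obtain ⟨c'', rfl⟩ := split (c := c') (v := i) (by omega)
      have : PM Γ s c'' := h2.D (by simp at hc'; omega)
      exact hf (this.add huN)
    refine ⟨u, Or.inr hu, fin u fun K hK => ?_⟩
    refine PM.U2 hχ hui huN (by omega) h2 hf (K+1) ?_
    convert hK using 1
    rw [add_assoc c' (ee u), ← Finsupp.single_add]; congr 2; omega
  · exact ⟨w, Or.inl rfl, fin w (PM.U2 hχ hwi hwN (by omega) hs h1)⟩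

/-- closed odd sequences give odd cycles -/
lemma odd_cyc (m : ℕ) : ∀ c : ℕ → σ, Odd m → c m = c 0 → (∀ i < m, Γ.Adj (c i) (c (i+1))) →
    ∃ m' : ℕ, ∃ d : ZMod m' → σ, Odd m' ∧ 3 ≤ m' ∧ Function.Injective d ∧ ∀ i, Γ.Adj (d i) (d (i+1)) := by
  induction m using Nat.strong_induction_on with
  | _ m ih =>
  intro c hm h0 hadj
  by_cases hinj : ∃ i j, i < j ∧ j < m ∧ c i = c j
  · obtain ⟨i, j, hij, hjm, hc⟩ := hinj
    rcases Nat.even_or_odd (j - i) with he | ho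
    · refine ih (m - (j - i)) (by omega) (fun l => if l ≤ i then c l else c (l + (j - i))) ?_ ?_ ?_
      · exact Nat.Odd.sub_even (by omega) hm he
      · have : ¬ (m - (j - i) ≤ i) := by omega
        simp only [this, if_false, Nat.zero_le, if_true]
        rw [show m - (j - i) + (j - i) = m by omega, h0]
      · intro l hl
        rcases lt_trichotomy l i with h | h | h
        · rw [if_pos (by omega), if_pos (by omega)]; exact hadj l (by omega)
        · subst h
          rw [if_pos (by omega), if_neg (by omega), hc, show l + 1 + (j - l) = j + 1 by omega]
          exact hadj j (by omega)
        · rw [if_neg (by omega), if_neg (by omega), show l + 1 + (j - i) = l + (j - i) + 1 by omega]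
          exact hadj _ (by omega)
    · refine ih (j - i) (by omega) (fun l => c (i + l)) ho ?_ ?_
      · simp only [add_zero]; rw [show i + (j - i) = j by omega, hc]
      · intro l hl
        exact hadj (i + l) (by omega)
  · push Not at hinj
    have hm3 : 3 ≤ m := by
      by_contra h
      obtain ⟨r, hr⟩ := hm
      obtain rfl : m = 1 := by omega
      have := hadj 0 (by omega)
      rw [zero_add, h0] at this
      exact this.ne rfl
    have : NeZero m := ⟨by omega⟩
    have : Fact (1 < m) := ⟨by omega⟩
    refine ⟨m, fun z => c z.val, hm, hm3, ?_, ?_⟩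
    · intro x y hxy
      apply ZMod.val_injective m
      by_contra hne
      rcases lt_or_gt_of_ne hne with h | h
      · exact hinj _ _ h (ZMod.val_lt y) hxy
      · exact hinj _ _ h (ZMod.val_lt x) hxy.symm
    · intro z
      have hz := ZMod.val_lt z
      dsimp only
      rw [ZMod.val_add, ZMod.val_one]
      rcases Nat.lt_or_ge (z.val + 1) m with h | h
      · rw [Nat.mod_eq_of_lt h]; exact hadj _ hz
      · have : z.val + 1 = m := by omega
        have h5 := hadj _ hz
        rw [this] at h5
        rw [this, Nat.mod_self, ← h0]; exact h5

lemma exists_chi (hdom : ∀ (m : ℕ) (c : ZMod m → σ), (Odd m ∧ 3 ≤ m ∧ Function.Injective c ∧ ∀ i, Γ.Adj (c i) (c (i + 1))) →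
      ∀ v ∉ Set.range c, ∃ u ∈ Set.range c, Γ.Adj u v) (i : σ) :
    ∃ χ : σ → Bool, 
      ∀ p q, p ≠ i → ¬ Γ.Adj i p → q ≠ i → ¬ Γ.Adj i q → Γ.Adj p q → χ p ≠ χ q := by
  let G : SimpleGraph σ := 
    { Adj := fun p q => Γ.Adj p q ∧ (p ≠ i ∧ ¬ Γ.Adj i p) ∧ (q ≠ i ∧ ¬ Γ.Adj i q)
      symm := ⟨fun p q h => ⟨h.1.symm, h.2.2, h.2.1⟩⟩
      loopless := ⟨fun p h => h.1.ne rfl⟩ }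
  have hG : G.Colorable 2 := by
    rw [SimpleGraph.two_colorable_iff_forall_loop_even]
    intro u w
    by_contra hw
    rw [Nat.not_even_iff_odd] at hw
    obtain ⟨m, d, h1, h2, h3, h4⟩ := odd_cyc (Γ := G) w.length w.getVert hw (by simp) (fun l hl => w.adj_getVert_succ hl)
    obtain ⟨x, ⟨z, rfl⟩, hx⟩ := hdom m d ⟨h1, h2, h3, fun z => (h4 z).1⟩ i (by
      rintro ⟨z, rfl⟩
      exact (h4 z).2.1.1 rfl)
    exact (h4 z).2.1.2 hx.symm
  obtain ⟨C⟩ := hG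
  refine ⟨fun p => decide (C p = 0), fun p q hp hp' hq hq' hpq h => ?_⟩
  have hv := C.valid (show G.Adj p q from ⟨hpq, ⟨hp, hp'⟩, ⟨hq, hq'⟩⟩)
  simp only [decide_eq_decide] at h
  generalize C p = x at *
  generalize C q = y at *
  revert x y; decide

lemma PM.dom {v : σ} [Fintype σ] (hv : ∀ u, u ≠ v → Γ.Adj v u) (s : ℕ) (c : σ →₀ ℕ) (h1 : s ≤ c v)
    (h2 : s + c v ≤ ∑ u, c u) : PM Γ s c := by
  classical
  induction s generalizing c with
  | zero => trivial
  | succ s ih =>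
    obtain ⟨u, hu, hcu⟩ : ∃ u, u ≠ v ∧ c u ≠ 0 := by
      by_contra! h
      rw [Finset.sum_eq_single v (fun u _ hu => h u hu) (by simp)] at h2
      omega
    obtain ⟨c', rfl⟩ := split hcu
    have : c' v ≠ 0 := by
      simp [Finsupp.single_apply, hu] at h1; omega
    obtain ⟨c'', rfl⟩ := split this
    refine PM.add (ih c'' ?_ ?_) (hv u hu)
    · simp [Finsupp.single_apply, hu] at h1; omega
    · simp [Finsupp.single_apply, hu, Finset.sum_add_distrib] at h2; omega

end LC

namespace LC
open Finsupp
variable {σ : Type} {Γ : SimpleGraph σ}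

lemma core {K : Type} [Field K] [Fintype σ] (k t : ℕ) (g : (σ →₀ ℕ) → (σ →₀ ℕ) → K)
    (hG : ∀ b c d, k ≤ degree b → ¬ PM Γ t c → g (b + d) c = if d ≤ c then g b (c - d) else 0)
    (hA1 : ∀ a i j, Γ.Adj i j → (∀ N, ¬ PM Γ t (a + single i N)) →
      (∀ N, ¬ PM Γ t (a + single j N)) →
      g (single i k) (a + single i k) = g (single j k) (a + single j k))
    (hchi : ∀ i, ∃ χ : σ → Bool,
      ∀ p q, p ≠ i → ¬ Γ.Adj i p → q ≠ i → ¬ Γ.Adj i q → Γ.Adj p q → χ p ≠ χ q)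
    (hnd : ∀ i, ∃ w, w ≠ i ∧ ¬ Γ.Adj i w) :
    ∃ Y : (σ →₀ ℕ) → K, (∀ a, Y a ≠ 0 → ∃ i, g (single i k) (a + single i k) ≠ 0) ∧
      ∀ b c, ¬ PM Γ t c → Fintype.card σ * (k + t) + 1 ≤ degree b →
        g b c = if b ≤ c then Y (c - b) else 0 := by
  classical
  have A2 : ∀ a i f, (∀ M N, ¬ PM Γ t (a + single i M + single f N)) →
      g (single i k) (a + single i k) = g (single f k) (a + single f k) := by
    intro a i f h
    have h1 := hG (single i k) (a + single i k + single f k) (single f k) (by simp) (h k k)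
    have h2 := hG (single f k) (a + single i k + single f k) (single i k) (by simp) (h k k)
    rw [if_pos (by simp), add_tsub_cancel_right] at h1
    rw [add_right_comm a, if_pos (by simp), add_tsub_cancel_right, add_right_comm a,
      add_comm (single f k)] at h2
    rw [← h1, h2]
  have A3 : ∀ a i j, (∀ N, ¬ PM Γ t (a + single i N)) → (∀ N, ¬ PM Γ t (a + single j N)) →
      g (single i k) (a + single i k) = g (single j k) (a + single j k) := by
    intro a i j hi hj
    obtain ⟨χ, hχ⟩ := hchi i
    obtain ⟨f, hf, hf'⟩ := PM.E hχ (t := t) (c := a + single i t) (by simp) (hi t) j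
    have h1 : ∀ M N, ¬ PM Γ t (a + single i M + single f N) := by
      intro M N h
      refine hf' N (PM.D' (i := i) (N := M) ?_ (by simp; omega))
      convert h.mono (single i t) using 1
      abel
    have h2 : ∀ N, ¬ PM Γ t (a + single f N) := by
      intro N h
      apply h1 0 N
      simpa using h
    rw [A2 a i f h1]
    rcases hf with rfl | hf
    · rfl
    · exact (hA1 a j f hf hj h2).symm
  let Y : (σ →₀ ℕ) → K := fun a => if h : ∃ i, ∀ N, ¬ PM Γ t (a + single i N) then
    g (single h.choose k) (a + single h.choose k) else 0
  have hY : ∀ a i, (∀ N, ¬ PM Γ t (a + single i N)) → Y a = g (single i k) (a + single i k) := by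
    intro a i h
    have h' : ∃ i, ∀ N, ¬ PM Γ t (a + single i N) := ⟨i, h⟩
    simp only [Y, dif_pos h']
    exact A3 _ _ _ h'.choose_spec h
  refine ⟨Y, ?_, ?_⟩
  · intro a ha
    by_cases h : ∃ i, ∀ N, ¬ PM Γ t (a + single i N)
    · simp only [Y, dif_pos h] at ha
      exact ⟨_, ha⟩
    · simp only [Y, dif_neg h] at ha
      exact absurd rfl ha
  have key : ∀ c i B, ¬ PM Γ t c → k + t ≤ B →
      g (single i B) c = if single i B ≤ c then Y (c - single i B) else 0 := by
    intro c i B hc hB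
    have hBk : single i B = single i k + single i (B - k) := by
      rw [← single_add]; congr 1; omega
    split_ifs with h
    · obtain ⟨a, rfl⟩ := exists_add_of_le h
      rw [add_comm] at hc ⊢
      rw [add_tsub_cancel_right, hY a i]
      · rw [hBk, hG _ _ _ (by simp) (by rw [← hBk]; exact hc), ← add_assoc, if_pos (by simp),
          add_tsub_cancel_right]
      · intro N hN
        refine hc (PM.D' (i := i) (N := N) ?_ (by simp; omega))
        convert hN.mono (single i B) using 1
        abel
    · rw [single_le_iff] at h
      by_cases h2 : c i < B - k
      · rw [hBk, hG _ _ _ (by simp) hc, if_neg (by rw [single_le_iff]; omega)]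
      · obtain ⟨χ, hχ⟩ := hchi i
        obtain ⟨w, hw, hw'⟩ := hnd i
        obtain ⟨f, hf, hf'⟩ := PM.E hχ (t := t) (c := c) (by omega) hc w
        have hfi : f ≠ i := by
          rintro rfl
          rcases hf with rfl | hf
          · exact hw rfl
          · exact hw' hf.symm
        have h1 := hG (single i B) (c + single f k) (single f k) (by simp; omega) (hf' k)
        have h3 := hG (single f k) (c + single f k) (single i B) (by simp) (hf' k)
        rw [if_pos (by simp), add_tsub_cancel_right] at h1
        rw [if_neg (by rw [single_le_iff]; simp [hfi]; omega), add_comm] at h3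
        rw [← h1, h3]
  intro b c hc hb
  obtain ⟨i, hi⟩ : ∃ i, k + t ≤ b i := by
    by_contra! h
    rw [Finsupp.degree_eq_sum] at hb
    have := Finset.sum_le_card_nsmul Finset.univ (fun i => b i) (k + t) (fun i _ => (h i).le)
    simp at this
    omega
  have hbd : b = single i (b i) + b.erase i := (single_add_erase i b).symm
  generalize b.erase i = d at hbd
  generalize b i = B at *
  subst hbd
  rw [hG _ _ _ (by simp; omega) hc]
  by_cases hd : d ≤ c
  · obtain ⟨c0, rfl⟩ := exists_add_of_le hd
    rw [add_comm d c0] at hc ⊢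
    rw [if_pos (by simp), add_tsub_cancel_right, key _ _ _ (fun h => hc (h.mono _)) hi]
    simp only [add_le_add_iff_right, add_tsub_add_eq_tsub_right]
  · rw [if_neg hd, if_neg (fun h => hd (le_trans (by simp) h))]

end LC

namespace LC
open MvPolynomial
open Finsupp (single degree)
variable {σ : Type} {Γ : SimpleGraph σ} {K : Type} [Field K]

lemma edge_pow_span (s : ℕ) : edgeIdeal K Γ ^ s =
    Ideal.span ((fun c => monomial c (1 : K)) '' {c | PM Γ s c}) := by
  induction s with
  | zero =>
    rw [pow_zero, Ideal.one_eq_top, eq_comm, Ideal.eq_top_iff_one]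
    exact Ideal.subset_span ⟨0, trivial, rfl⟩
  | succ s ih =>
    rw [pow_succ, ih, edgeIdeal, Ideal.span_mul_span']
    congr 1
    ext p
    rw [Set.mem_mul]
    constructor
    · rintro ⟨_, ⟨c, hc, rfl⟩, _, ⟨i, j, hij, rfl⟩, rfl⟩
      refine ⟨c + ee i + ee j, PM.add hc hij, ?_⟩
      simp [X, monomial_mul, add_assoc]
    · rintro ⟨_, ⟨i, j, c, hij, rfl, hc⟩, rfl⟩
      refine ⟨_, ⟨c, hc, rfl⟩, _, ⟨i, j, hij, rfl⟩, ?_⟩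
      simp [X, monomial_mul, add_assoc]

lemma mem_edge_pow (s : ℕ) (f : MvPolynomial σ K) :
    f ∈ edgeIdeal K Γ ^ s ↔ ∀ c, ¬ PM Γ s c → coeff c f = 0 := by
  rw [edge_pow_span, mem_ideal_span_monomial_image]
  constructor
  · intro h c hc
    by_contra h2
    obtain ⟨d, hd, hdc⟩ := h c (mem_support_iff.2 h2)
    exact hc (PM.mono_le hd hdc)
  · intro h c hc
    refine ⟨c, ?_, le_rfl⟩
    by_contra h2
    exact mem_support_iff.1 hc (h c h2)

lemma mk_eq_iff (s : ℕ) (f g : MvPolynomial σ K) :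
    Ideal.Quotient.mk (edgeIdeal K Γ ^ s) f = Ideal.Quotient.mk (edgeIdeal K Γ ^ s) g ↔
      ∀ c, ¬ PM Γ s c → coeff c f = coeff c g := by
  rw [Ideal.Quotient.eq, mem_edge_pow]
  simp only [coeff_sub, sub_eq_zero]

lemma mem_max (k : ℕ) (p : MvPolynomial σ K) :
    p ∈ maxIdeal K σ ^ k ↔ ∀ x ∈ p.support, k ≤ degree x := mem_pow_idealOfVars_iff k p

lemma mon_mem {k : ℕ} {b : σ →₀ ℕ} (h : k ≤ degree b) (r : K) :
    monomial b r ∈ maxIdeal K σ ^ k := by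
  classical
  rw [mem_max]
  intro x hx
  have := support_monomial_subset hx
  simp at this
  rw [this]; exact h

variable (K Γ) in
def Ev (t : ℕ) : Prop := ∀ k (φ : ↥(maxIdeal K σ ^ k) →ₗ[MvPolynomial σ K]
    (MvPolynomial σ K ⧸ edgeIdeal K Γ ^ t)), ∃ l, ∃ h : k ≤ l, ∃ x, ∀ j (hj : j ∈ maxIdeal K σ ^ l),
      φ ⟨j, Ideal.pow_le_pow_right h hj⟩ = j • x

/-- multiplication by a monomial -/
lemma exists_mult {t : ℕ} {i j : σ} (hij : Γ.Adj i j) :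
    ∃ θ : (MvPolynomial σ K ⧸ edgeIdeal K Γ ^ t) →ₗ[MvPolynomial σ K]
      (MvPolynomial σ K ⧸ edgeIdeal K Γ ^ (t+1)),
      ∀ p, θ (Ideal.Quotient.mk _ p) = Ideal.Quotient.mk _ (monomial (ee i + ee j) 1 * p) := by
  refine ⟨Submodule.mapQ (edgeIdeal K Γ ^ t) (edgeIdeal K Γ ^ (t+1))
    (LinearMap.mulLeft (MvPolynomial σ K) (monomial (ee i + ee j) 1)) ?_, fun p => rfl⟩
  intro p hp
  rw [Submodule.mem_comap, LinearMap.mulLeft_apply, mul_comm, pow_succ]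
  refine Ideal.mul_mem_mul hp (Ideal.subset_span ⟨i, j, hij, ?_⟩)
  simp [X, monomial_mul]

lemma ext_mon {k l : ℕ} (h : k ≤ l) {J : Ideal (MvPolynomial σ K)}
    (φ : ↥(maxIdeal K σ ^ k) →ₗ[MvPolynomial σ K] (MvPolynomial σ K ⧸ J)) (x : MvPolynomial σ K ⧸ J)
    (H : ∀ b (hb : l ≤ degree b), φ ⟨monomial b 1, mon_mem (h.trans hb) 1⟩ = monomial b (1 : K) • x)
    (j) (hj : j ∈ maxIdeal K σ ^ l) : φ ⟨j, Ideal.pow_le_pow_right h hj⟩ = j • x := by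
  classical
  rw [mem_max] at hj
  have hm : ∀ b : j.support, (monomial (b : σ →₀ ℕ) (1 : K)) ∈ maxIdeal K σ ^ k :=
    fun b => mon_mem (h.trans (hj b b.2)) 1
  have hC : ∀ b : σ →₀ ℕ, monomial b (coeff b j) = C (coeff b j) * monomial b 1 := by
    intro b; rw [C_mul_monomial, mul_one]
  have e : (⟨j, (mem_max k j).2 fun b hb => h.trans (hj b hb)⟩ : ↥(maxIdeal K σ ^ k)) =
      ∑ b : j.support, (C (coeff (b : σ →₀ ℕ) j) : MvPolynomial σ K) •
        (⟨monomial (b : σ →₀ ℕ) 1, hm b⟩ : ↥(maxIdeal K σ ^ k)) := by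
    apply Subtype.ext
    rw [AddSubmonoidClass.coe_finsetSum]
    simp only [Submodule.coe_smul, smul_eq_mul, ← hC]
    rw [Finset.sum_coe_sort j.support (fun b => monomial b (coeff b j))]
    exact j.as_sum
  rw [e, map_sum]
  conv_rhs => rw [j.as_sum, Finset.sum_smul, ← Finset.sum_coe_sort]
  refine Finset.sum_congr rfl fun b _ => ?_
  rw [map_smul, H b (hj b b.2), hC, mul_smul]

theorem caseB [Fintype σ] {t : ℕ} 
    (hchi : ∀ i, ∃ χ : σ → Bool,
      ∀ p q, p ≠ i → ¬ Γ.Adj i p → q ≠ i → ¬ Γ.Adj i q → Γ.Adj p q → χ p ≠ χ q)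
    (hnd : ∀ i, ∃ w, w ≠ i ∧ ¬ Γ.Adj i w) (h : Ev Γ K (t+1)) : Ev Γ K t := by
  classical
  intro k ψ
  have hL : ∀ b : σ →₀ ℕ, ∃ p : MvPolynomial σ K, ∀ hb : k ≤ degree b,
      Ideal.Quotient.mk (edgeIdeal K Γ ^ t) p = ψ ⟨monomial b 1, mon_mem hb 1⟩ := by
    intro b
    by_cases hb : k ≤ degree b
    · obtain ⟨p, hp⟩ := Ideal.Quotient.mk_surjective (ψ ⟨monomial b 1, mon_mem hb 1⟩)
      exact ⟨p, fun _ => hp⟩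
    · exact ⟨0, fun h => absurd h hb⟩
  choose L hL using hL
  have hG : ∀ b c d, k ≤ degree b → ¬ PM Γ t c →
      coeff c (L (b + d)) = if d ≤ c then coeff (c - d) (L b) else 0 := by
    intro b c d hb hc
    have h1 : Ideal.Quotient.mk (edgeIdeal K Γ ^ t) (L (b + d)) =
        Ideal.Quotient.mk (edgeIdeal K Γ ^ t) (monomial d 1 * L b) := by
      have hbd : k ≤ degree (b + d) := by rw [map_add]; omega
      have e : (⟨monomial (b + d) 1, mon_mem hbd 1⟩ : ↥(maxIdeal K σ ^ k)) =
        (monomial d (1:K)) • (⟨monomial b 1, mon_mem hb 1⟩ : ↥(maxIdeal K σ ^ k)) := by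
        apply Subtype.ext
        simp [monomial_mul, add_comm]
      rw [hL _ hbd, e, map_smul, ← hL _ hb]
      rfl
    rw [(mk_eq_iff _ _ _).1 h1 c hc, coeff_monomial_mul', one_mul]
  have hA1 : ∀ a i j, Γ.Adj i j → (∀ N, ¬ PM Γ t (a + single i N)) →
      (∀ N, ¬ PM Γ t (a + single j N)) →
      coeff (a + single i k) (L (single i k)) = coeff (a + single j k) (L (single j k)) := by
    intro a i j hij hi hj
    obtain ⟨θ, hθ⟩ := exists_mult (K := K) (t := t) hij
    obtain ⟨l, hkl, x, hx⟩ := h k (θ.comp ψ)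
    obtain ⟨Y, rfl⟩ := Ideal.Quotient.mk_surjective x
    have main : ∀ u, (∀ N, ¬ PM Γ t (a + single u N)) → (∀ N, ¬ PM Γ (t+1) (a + single u N + (ee i + ee j))) → 
        coeff (a + single u k) (L (single u k)) = coeff (a + (ee i + ee j)) Y := by
      intro u hu hu'
      have hd : l ≤ degree (single u l) := by simp
      have h1 := hx (monomial (single u l) 1) (mon_mem hd 1)
      rw [LinearMap.comp_apply, ← hL _ (hkl.trans hd), hθ] at h1
      have h2 := (mk_eq_iff (t+1) _ (monomial (single u l) 1 * Y)).1 h1 (a + single u l + (ee i + ee j)) (hu' l)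
      rw [coeff_monomial_mul', if_pos (by simp), one_mul, add_tsub_cancel_right, add_right_comm,
        coeff_monomial_mul', if_pos (by simp), one_mul, add_tsub_cancel_right] at h2
      rw [← h2]
      have e : single u l = single u k + single u (l - k) := by
        rw [← Finsupp.single_add]; congr 1; omega
      have h3 := hG (single u k) (a + single u l) (single u (l - k)) (by simp) (hu l)
      rw [← e, e, ← add_assoc, if_pos (by simp), add_tsub_cancel_right] at h3
      rw [e, ← add_assoc, h3]
    rw [main i hi, main j hj]
    · intro N hN
      refine hj (N+1) (PM.drop' (v := i) ?_)
      convert hN using 1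
      rw [Finsupp.single_add]; abel
    · intro N hN
      refine hi (N+1) (PM.drop' (v := j) ?_)
      convert hN using 1
      rw [Finsupp.single_add]; abel
  obtain ⟨Y, hY, hY'⟩ := core (K := K) k t (fun b c => coeff c (L b)) hG hA1 hchi hnd
  have hfin : (Function.support Y).Finite := by
    refine (Set.finite_iUnion (fun i : σ => (Finset.finite_toSet
      ((L (single i k)).support.image (fun c => c - single i k))))).subset ?_
    intro a ha
    obtain ⟨i, hi⟩ := hY a ha
    refine Set.mem_iUnion.2 ⟨i, ?_⟩
    simp only [Finset.coe_image, Set.mem_image, Finset.mem_coe, mem_support_iff]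
    exact ⟨_, hi, by simp⟩
  have hy : ∀ a, coeff a (∑ a ∈ hfin.toFinset, monomial a (Y a)) = Y a := by
    intro a
    rw [coeff_sum]
    simp only [coeff_monomial]
    rw [Finset.sum_ite_eq']
    split_ifs with h
    · rfl
    · simpa [eq_comm] using h
  generalize (∑ a ∈ hfin.toFinset, monomial a (Y a)) = y at hy
  have hl : k ≤ max k (Fintype.card σ * (k + t) + 1) := le_max_left _ _
  refine ⟨_, hl, Ideal.Quotient.mk _ y, ext_mon hl ψ _ ?_⟩
  intro b hb
  rw [← hL b (hl.trans hb)]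
  refine (mk_eq_iff t _ (monomial b 1 * y)).2 fun c hc => ?_
  rw [hY' b c hc (le_trans (le_max_right _ _) hb), coeff_monomial_mul', one_mul, hy]

end LC

namespace LC
open MvPolynomial
open Finsupp (single degree)
variable {σ : Type} {Γ : SimpleGraph σ} {K : Type} [Field K]

lemma exists_shift (s : ℕ) (v : σ) : ∃ Φ : MvPolynomial σ K →ₗ[K] MvPolynomial σ K,
    ∀ p c, coeff c (Φ p) = if s ≤ c v then coeff (c + ee v) p else 0 := by
  classical
  refine ⟨(basisMonomials σ K).constr K
    (fun b => if s + 1 ≤ b v then monomial (b - ee v) (1 : K) else 0), fun p c => ?_⟩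
  induction p using MvPolynomial.induction_on' with
  | monomial b a =>
    have e : monomial b a = a • basisMonomials σ K b := by
      simp [coe_basisMonomials, smul_monomial]
    rw [e, map_smul, Module.Basis.constr_basis, coe_basisMonomials, coeff_smul, coeff_smul]
    by_cases hb : s + 1 ≤ b v
    · obtain ⟨b', rfl⟩ := split (c := b) (v := v) (by omega)
      simp only [Finsupp.add_apply, Finsupp.single_eq_same] at hb
      simp only [Finsupp.add_apply, Finsupp.single_eq_same, if_pos hb, add_tsub_cancel_right,
        coeff_monomial, add_left_inj]
      by_cases h : b' = c
      · subst h
        rw [if_pos (by omega : s ≤ b' v)]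
      · simp [h]
    · rw [if_neg hb]
      split_ifs with h
      · rw [coeff_monomial, if_neg]
        · simp
        · rintro rfl
          simp at hb; omega
      · simp
  | add p q hp hq =>
    rw [map_add, coeff_add, hp, hq, coeff_add]
    split_ifs <;> simp

lemma not_PM_single (s N : ℕ) (v : σ) : ¬ PM Γ (s+1) (single v N) := by
  classical
  rintro ⟨i, j, c, hij, h, -⟩
  have hi : i = v := by
    by_contra hi
    have := DFunLike.congr_fun h i
    simp [Finsupp.single_apply, Ne.symm hi] at this
    omega
  have hj : j = v := by
    by_contra hj
    have := DFunLike.congr_fun h j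
    simp [Finsupp.single_apply, Ne.symm hj] at this
  exact hij.ne (hi.trans hj.symm)

theorem caseA [Fintype σ] (s : ℕ) (v : σ) (hv : ∀ u, u ≠ v → Γ.Adj v u) : ¬ Ev Γ K (s+1) := by
  classical
  intro hE
  obtain ⟨Φ, hΦ⟩ := exists_shift (K := K) (s+1) v
  have hdeg : ∀ c : σ →₀ ℕ, degree c = c v + ∑ u ∈ Finset.univ.erase v, c u := by
    intro c
    rw [Finsupp.degree_eq_sum, Finset.add_sum_erase _ (fun u => c u) (Finset.mem_univ v)]
  have hlin : ∀ (r p : MvPolynomial σ K), p ∈ maxIdeal K σ ^ (2 * (s+1)) →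
      Ideal.Quotient.mk (edgeIdeal K Γ ^ (s+1)) (Φ (r * p)) =
        Ideal.Quotient.mk (edgeIdeal K Γ ^ (s+1)) (r * Φ p) := by
    intro r p hp
    induction r using MvPolynomial.induction_on' with
    | add r q hr hq => rw [add_mul, add_mul, map_add, map_add, map_add, hr, hq]
    | monomial d a =>
      rw [mk_eq_iff]
      intro c hc
      rw [hΦ, coeff_monomial_mul', coeff_monomial_mul', hΦ]
      have hz : ∀ e : σ →₀ ℕ, degree e < 2 * (s+1) → coeff e p = 0 := by
        intro e he
        by_contra h
        have := (mem_max _ _).1 hp e (mem_support_iff.2 h)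
        omega
      by_cases hcv : s + 1 ≤ c v
      swap
      · rw [if_neg hcv, if_neg (c := s + 1 ≤ (c - d) v) (by rw [Finsupp.tsub_apply]; omega)]
        simp
      rw [if_pos hcv]
      have h1 : degree c < s + 1 + c v := by
        by_contra h
        refine hc (PM.dom hv _ _ hcv ?_)
        rw [Finsupp.degree_eq_sum] at h
        omega
      rw [hdeg] at h1
      have h2 : degree (c + ee v - d) ≤ (c + ee v - d) v + ∑ u ∈ Finset.univ.erase v, c u := by
        rw [hdeg]
        gcongr with u hu
        have hu' : u ≠ v := Finset.ne_of_mem_erase hu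
        simp [Finsupp.single_apply, hu'.symm]
      have h3 : (c + ee v - d) v = c v + 1 - d v := by simp
      by_cases hd : d ≤ c
      · rw [if_pos hd, if_pos (hd.trans (by simp))]
        by_cases h4 : s + 1 ≤ (c - d) v
        · rw [if_pos h4, tsub_add_eq_add_tsub hd]
        · rw [if_neg h4, hz]
          rw [Finsupp.tsub_apply] at h4
          have := hd v
          omega
      · rw [if_neg hd]
        split_ifs with h5
        · rw [hz, mul_zero]
          have : c v < d v := by
            by_contra h6
            apply hd
            intro u
            by_cases hu : u = v
            · subst hu; omega
            · simpa [Finsupp.single_apply, Ne.symm hu] using h5 u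
          omega
        · rfl
  let φ : ↥(maxIdeal K σ ^ (2 * (s+1))) →ₗ[MvPolynomial σ K]
      (MvPolynomial σ K ⧸ edgeIdeal K Γ ^ (s+1)) :=
    { toFun := fun p => Ideal.Quotient.mk _ (Φ p.1)
      map_add' := fun p q => by
        rw [Submodule.coe_add, map_add, map_add]
      map_smul' := fun r p => by
        exact hlin r p.1 p.2 }
  obtain ⟨l, h, x, hx⟩ := hE _ φ
  obtain ⟨Y, rfl⟩ := Ideal.Quotient.mk_surjective x
  have h1 := hx (monomial (single v l) 1) (mon_mem (by simp) 1)
  have h2 := (mk_eq_iff (s+1) _ (monomial (single v l) 1 * Y)).1 h1 (single v (l-1))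
    (not_PM_single _ _ _)
  rw [hΦ, coeff_monomial_mul', if_pos (by simp; omega),
    if_neg (by rw [Finsupp.single_le_iff]; simp; omega), ← Finsupp.single_add, show l - 1 + 1 = l by omega] at h2
  simp at h2

end LC

/-- Let `Γ` be a connected non-bipartite graph in which the vertex set
of every odd cycle is dominating. If `H^1_m(R/I^t) ≠ 0` for some `t ≥ 1`, then
`H^1_m(R/I^{t+1}) ≠ 0`. -/
theorem stmt12 (k : Type) [Field k] (n : ℕ) (Γ : SimpleGraph (Fin n))
    (hiso : NoIsolated Γ) (hconn : Γ.Connected) (hnb : ¬ Γ.Colorable 2)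
    (hdom : ∀ (m : ℕ) (c : ZMod m → Fin n), IsOddCycle Γ m c →
      Dominating Γ (Set.range c))
    (t : ℕ) (ht : 1 ≤ t)
    (h : Nontrivial (locCoh k ((edgeIdeal k Γ) ^ t) 1)) :
    Nontrivial (locCoh k ((edgeIdeal k Γ) ^ (t + 1)) 1) := by
  have key : ∀ s, Subsingleton (locCoh k ((edgeIdeal k Γ) ^ s) 1) ↔ LC.Ev Γ k s := fun s =>
    LC.crit (maxIdeal k (Fin n)) (ModuleCat.of _ (MvPolynomial (Fin n) k ⧸ edgeIdeal k Γ ^ s))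
  by_contra hcon
  rw [not_nontrivial_iff_subsingleton, key] at hcon
  by_cases hA : ∃ v, ∀ u, u ≠ v → Γ.Adj v u
  · obtain ⟨v, hv⟩ := hA
    exact LC.caseA t v hv hcon
  · push Not at hA
    have h2 := (key t).2 (LC.caseB (LC.exists_chi hdom) hA hcon)
    exact not_nontrivial_iff_subsingleton.2 h2 h

end
end
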